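/- arXiv:2602.21509 — 4 statements merged into one kernel-verified Lean document; each statement's English description precedes it below -/
import Mathlib

section
/- Let D¹ and D² be nonempty finite subsets of ℝ^d with ‖x‖₂ ≤ x_max for every x ∈ D¹ ∪ D², and fix integers n₁, n₂ ≥ 1. Draw X₁⁽¹⁾,…,X_{n₁}⁽¹⁾ i.i.d. uniformly (with replacement) from D¹ and independently X₁⁽²⁾,…,X_{n₂}⁽²⁾ i.i.d. uniformly (with replacement) from D², and let n′ = min{n₁, n₂}. Then there exists a constant C = C(ξ, ζ, ν, x_max) > 0 such that for every δ ∈ (0,1), with probability at least 1 − δ, sup over Θ ∈ Φ_{ξ,ζ,ν} of |Δ(Θ) − Δₙ(Θ)| ≤ 4C√(d/n′) + 8√(2 log(8/δ)/n′), where Δ(Θ) = max over k ∈ [K] of |(1/|D¹|) Σ_{x∈D¹} ψ_k(x;Θ) − (1/|D²|) Σ_{x∈D²} ψ_k(x;Θ)| and Δₙ(Θ) = max over k ∈ [K] of |(1/n₁) Σ_{i=1}^{n₁} ψ_k(X_i⁽¹⁾;Θ) − (1/n₂) Σ_{j=1}^{n₂} ψ_k(X_j⁽²⁾;Θ)|.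 -/
open MeasureTheory

/-- Density of a `d`-dimensional Gaussian with mean `μ` and covariance `S`. -/
noncomputable def gaussDensity {d : ℕ} (x μ : EuclideanSpace ℝ (Fin d))
    (S : Matrix (Fin d) (Fin d) ℝ) : ℝ :=
  (2 * Real.pi) ^ (-(d : ℝ) / 2) * S.det ^ (-(1 : ℝ) / 2) *
    Real.exp (-(∑ i, ∑ j, (x - μ) i * S⁻¹ i j * (x - μ) j) / 2)

/-- Responsibility (soft assignment) of component `k` for the Gaussian mixture with
weights `π`, means `μ` and covariances `S`. -/
noncomputable def resp {d K : ℕ} (π : Fin K → ℝ)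
    (μ : Fin K → EuclideanSpace ℝ (Fin d)) (S : Fin K → Matrix (Fin d) (Fin d) ℝ)
    (k : Fin K) (x : EuclideanSpace ℝ (Fin d)) : ℝ :=
  π k * gaussDensity x (μ k) (S k) / ∑ l, π l * gaussDensity x (μ l) (S l)

/-- The constrained parameter set `Φ_{ξ,ζ,ν}`: mixture weights in the open simplex with
`ξ < π_k < 1 - ξ`, means bounded by `ν`, and symmetric covariances whose eigenvalues all
lie in `(ζ, 1/ζ)` (expressed via the quadratic form). -/
def inPhi {d K : ℕ} (ξ ζ ν : ℝ) (π : Fin K → ℝ)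
    (μ : Fin K → EuclideanSpace ℝ (Fin d)) (S : Fin K → Matrix (Fin d) (Fin d) ℝ) : Prop :=
  (∀ k, 0 < π k) ∧ (∑ k, π k = 1) ∧
  (∀ k, ξ < π k ∧ π k < 1 - ξ) ∧ (∀ k, ‖μ k‖ ≤ ν) ∧
  (∀ k, (S k).IsSymm ∧ ∀ v : EuclideanSpace ℝ (Fin d), v ≠ 0 →
    ζ * ‖v‖ ^ 2 < ∑ i, ∑ j, v i * S k i j * v j ∧
      (∑ i, ∑ j, v i * S k i j * v j) < (1 / ζ) * ‖v‖ ^ 2)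

/-- Sign attached to a boolean. -/
noncomputable def sg (b : Bool) : ℝ := if b then 1 else -1

lemma sg_not (b : Bool) : sg (!b) = - sg b := by cases b <;> simp [sg]
lemma sg_sq (b : Bool) : sg b * sg b = 1 := by cases b <;> simp [sg]

/-- Flip one coordinate. -/
def flipAt {J : Type*} [DecidableEq J] (j : J) (ε : J → Bool) : J → Bool :=
  Function.update ε j (!ε j)

lemma flipAt_same {J : Type*} [DecidableEq J] (j : J) (ε : J → Bool) :
    flipAt j ε j = !ε j := by simp [flipAt]

lemma flipAt_ne {J : Type*} [DecidableEq J] {j k : J} (h : k ≠ j) (ε : J → Bool) :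
    flipAt j ε k = ε k := by simp [flipAt, h]

lemma flipAt_invol {J : Type*} [DecidableEq J] (j : J) :
    Function.Involutive (flipAt j) := by
  intro ε
  funext k
  by_cases h : k = j
  · subst h; simp [flipAt_same]
  · simp [flipAt_ne h]

lemma sum_flipAt {J : Type*} [Fintype J] [DecidableEq J] (j : J) (G : (J → Bool) → ℝ) :
    ∑ ε, G (flipAt j ε) = ∑ ε, G ε :=
  Equiv.sum_comp (Function.Involutive.toPerm _ (flipAt_invol j)) G

lemma sum_flipAll {J : Type*} [Fintype J] [DecidableEq J] (G : (J → Bool) → ℝ) :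
    ∑ ε : J → Bool, G (fun j => !ε j) = ∑ ε, G ε :=
  Equiv.sum_comp (Function.Involutive.toPerm (fun ε : J → Bool => fun j => !ε j)
    (by intro ε; funext j; simp)) G

/-- Rademacher complexity bound in selector form. -/
def Rad {J ι : Type*} [Fintype J] [DecidableEq J] (u : ι → J → ℝ) (B : ℝ) : Prop :=
  ∀ s : (J → Bool) → ι, ∑ ε, ∑ j, sg (ε j) * u (s ε) j ≤ 2 ^ Fintype.card J * B

section rad
variable {J ι : Type*} [Fintype J] [DecidableEq J]

lemma Rad.add {u v : ι → J → ℝ} {A B : ℝ} (hu : Rad u A) (hv : Rad v B) :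
    Rad (fun i j => u i j + v i j) (A + B) := by
  intro s
  have := add_le_add (hu s) (hv s)
  rw [← Finset.sum_add_distrib] at this
  simp only [← Finset.sum_add_distrib, ← mul_add] at this
  exact this

lemma Rad.neg {u : ι → J → ℝ} {A : ℝ} (hu : Rad u A) :
    Rad (fun i j => - u i j) A := by
  intro s
  have := hu (fun ε => s (fun j => !ε j))
  rw [← sum_flipAll] at this
  simpa [sg_not] using this

lemma Rad.smul {u : ι → J → ℝ} {A c : ℝ} (hu : Rad u A) (hc : 0 ≤ c) :
    Rad (fun i j => c * u i j) (c * A) := by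
  intro s
  have := mul_le_mul_of_nonneg_left (hu s) hc
  simp only [Finset.mul_sum] at this
  refine le_trans (le_of_eq ?_) (this.trans (le_of_eq (by ring)))
  exact Finset.sum_congr rfl fun _ _ => Finset.sum_congr rfl fun _ _ => by ring

lemma Rad.mono {u : ι → J → ℝ} {A B : ℝ} (hu : Rad u A) (h : A ≤ B) : Rad u B := by
  intro s
  exact (hu s).trans (by gcongr)

lemma Rad.sum {κ : Type*} (T : Finset κ) {u : κ → ι → J → ℝ} {A : ℝ}
    (hu : ∀ l ∈ T, Rad (u l) A) :
    Rad (fun i j => ∑ l ∈ T, u l i j) (T.card * A) := by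
  classical
  induction T using Finset.induction_on with
  | empty => intro s; simp
  | insert a T ha ih =>
    have h := (hu a (by simp)).add (ih fun l hl => hu l (by simp [hl]))
    simp only [Finset.sum_insert ha, Finset.card_insert_of_notMem ha]
    convert h using 1
    push_cast; ring

lemma Rad.step {u v : ι → J → ℝ} {A : ℝ} (j : J) (hv : Rad v A)
    (h1 : ∀ i k, k ≠ j → u i k = v i k) (h2 : ∀ i i', |u i j - u i' j| ≤ |v i j - v i' j|) :
    Rad u A := by
  classical
  intro s
  set s' : (J → Bool) → ι := fun ε =>
    if 0 ≤ sg (ε j) * (v (s ε) j - v (s (flipAt j ε)) j) then s ε else s (flipAt j ε) with hs'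
  refine le_trans ?_ (hv s')
  set G : (J → Bool) → ℝ := fun ε => ∑ k, sg (ε k) * u (s ε) k with hG
  set H : (J → Bool) → ℝ := fun ε => ∑ k, sg (ε k) * v (s' ε) k with hH
  have key : ∀ ε, G ε + G (flipAt j ε) ≤ H ε + H (flipAt j ε) := by
    intro ε
    have e1 : ∀ (f : J → ℝ), ∑ k, f k = f j + ∑ k ∈ Finset.univ.erase j, f k := fun f =>
      (Finset.add_sum_erase _ f (Finset.mem_univ j)).symm
    have r1 : ∀ i, ∑ k ∈ Finset.univ.erase j, sg (ε k) * u i k =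
        ∑ k ∈ Finset.univ.erase j, sg (ε k) * v i k := fun i =>
      Finset.sum_congr rfl fun k hk => by rw [h1 i k (Finset.ne_of_mem_erase hk)]
    have r2 : ∀ (w : ι → J → ℝ) i, ∑ k ∈ Finset.univ.erase j, sg (flipAt j ε k) * w i k =
        ∑ k ∈ Finset.univ.erase j, sg (ε k) * w i k := fun w i =>
      Finset.sum_congr rfl fun k hk => by rw [flipAt_ne (Finset.ne_of_mem_erase hk)]
    simp only [hG, hH, e1, r2, r1, flipAt_same, sg_not]
    have h2' := h2 (s ε) (s (flipAt j ε))
    have hup : sg (ε j) * (u (s ε) j - u (s (flipAt j ε)) j) ≤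
        |v (s ε) j - v (s (flipAt j ε)) j| := by
      refine le_trans ?_ h2'
      refine (le_abs_self _).trans ?_
      rw [abs_mul]
      cases ε j <;> simp [sg]
    have habs : |v (s ε) j - v (s (flipAt j ε)) j| =
        |sg (ε j) * (v (s ε) j - v (s (flipAt j ε)) j)| := by
      rw [abs_mul]
      cases ε j <;> simp [sg]
    simp only [hs', flipAt_same, sg_not, flipAt_invol j ε]
    have eq2 : -sg (ε j) * (v (s (flipAt j ε)) j - v (s ε) j) =
      sg (ε j) * (v (s ε) j - v (s (flipAt j ε)) j) := by ring
    simp only [eq2]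
    rw [habs] at hup
    split_ifs with hc
    · rw [abs_of_nonneg hc] at hup
      linarith
    · rw [abs_of_neg (not_le.mp hc)] at hup
      linarith
  have := Finset.sum_le_sum fun ε (_ : ε ∈ Finset.univ) => key ε
  rw [Finset.sum_add_distrib, Finset.sum_add_distrib, sum_flipAt, sum_flipAt] at this
  linarith

lemma Rad.contract {u v : ι → J → ℝ} {A : ℝ} (hv : Rad v A)
    (h2 : ∀ i i' j, |u i j - u i' j| ≤ |v i j - v i' j|) :
    Rad u A := by
  classical
  have : ∀ T : Finset J, Rad (fun i j => if j ∈ T then u i j else v i j) A := by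
    intro T
    induction T using Finset.induction_on with
    | empty => simpa using hv
    | insert a T ha ih =>
      refine Rad.step a ih ?_ ?_
      · intro i k hk
        simp [hk]
      · intro i i'
        simpa [ha] using h2 i i' a
  simpa using this Finset.univ

lemma Rad.lip {u v : ι → J → ℝ} {A L : ℝ} (hv : Rad v A) (hL : 0 ≤ L)
    (h2 : ∀ i i' j, |u i j - u i' j| ≤ L * |v i j - v i' j|) :
    Rad u (L * A) := by
  refine (hv.smul hL).contract fun i i' j => (h2 i i' j).trans ?_
  rw [← mul_sub, abs_mul, abs_of_nonneg hL]

lemma Rad.mul {u v : ι → J → ℝ} {A B b : ℝ} (hu : Rad u A) (hv : Rad v B) (hb : 0 ≤ b)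
    (hub : ∀ i j, |u i j| ≤ b) (hvb : ∀ i j, |v i j| ≤ b) :
    Rad (fun i j => u i j * v i j) (3 * b * (A + B)) := by
  have sq : ∀ (w : ι → J → ℝ) (c W : ℝ), 0 ≤ c → Rad w W → (∀ i j, |w i j| ≤ c) →
      Rad (fun i j => w i j ^ 2) (2 * c * W) := by
    intro w c W hc hw hwb
    refine hw.lip (by positivity) fun i i' j => ?_
    have : w i j ^ 2 - w i' j ^ 2 = (w i j + w i' j) * (w i j - w i' j) := by ring
    rw [this, abs_mul]
    gcongr
    exact (abs_add_le _ _).trans (by linarith [hwb i j, hwb i' j])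
  have h1 := sq _ (2 * b) _ (by positivity) (hu.add hv)
    (fun i j => (abs_add_le _ _).trans (by linarith [hub i j, hvb i j]))
  have h2 := (sq _ b _ hb hu hub).neg
  have h3 := (sq _ b _ hb hv hvb).neg
  have := ((h1.add h2).add h3).smul (c := 1/2) (by norm_num)
  convert this using 1
  · funext i j; ring
  · ring

lemma Rad.comp {κ : Type*} {u : ι → J → ℝ} {A : ℝ} (hu : Rad u A) (p : κ → ι) :
    Rad (fun i j => u (p i) j) A := fun s => hu (fun ε => p (s ε))

lemma sum_sg_sg (j k : J) : ∑ ε : J → Bool, sg (ε j) * sg (ε k) =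
    if j = k then 2 ^ Fintype.card J else 0 := by
  split_ifs with h
  · subst h
    simp [sg_sq]
  · have := sum_flipAt j (fun ε => sg (ε j) * sg (ε k))
    simp only [flipAt_same, flipAt_ne (Ne.symm h), sg_not, neg_mul, Finset.sum_neg_distrib] at this
    linarith

lemma Rad.linear {E : Type*} [NormedAddCommGroup E] [InnerProductSpace ℝ E]
    (w : ι → E) (φ : J → E) {a b : ℝ} (ha : 0 ≤ a) (hb : 0 ≤ b) (hw : ∀ i, ‖w i‖ ≤ a)
    (hφ : ∀ j, ‖φ j‖ ≤ b) :
    Rad (fun i j => inner ℝ (w i) (φ j)) (a * b * Real.sqrt (Fintype.card J)) := by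
  intro s
  set Z : (J → Bool) → E := fun ε => ∑ j, sg (ε j) • φ j with hZ
  have h1 : ∀ ε, ∑ j, sg (ε j) * inner ℝ (w (s ε)) (φ j) ≤ a * ‖Z ε‖ := by
    intro ε
    have : ∑ j, sg (ε j) * inner ℝ (w (s ε)) (φ j) = inner ℝ (w (s ε)) (Z ε) := by
      simp [hZ, inner_sum, inner_smul_right]
    rw [this]
    refine (real_inner_le_norm _ _).trans ?_
    gcongr
    exact hw _
  have h2 : ∑ ε, ‖Z ε‖ ^ 2 ≤ 2 ^ Fintype.card J * (Fintype.card J * b ^ 2) := by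
    have : ∑ ε, ‖Z ε‖ ^ 2 = 2 ^ Fintype.card J * ∑ j, ‖φ j‖ ^ 2 := by
      have e : ∀ ε, ‖Z ε‖ ^ 2 = ∑ j, ∑ k, sg (ε j) * sg (ε k) * inner ℝ (φ j) (φ k) := by
        intro ε
        rw [← real_inner_self_eq_norm_sq]
        simp only [hZ, inner_sum, sum_inner, inner_smul_left, inner_smul_right]
        simp only [Finset.mul_sum]
        rw [Finset.sum_comm]
        refine Finset.sum_congr rfl fun _ _ => Finset.sum_congr rfl fun _ _ => ?_
        simp; ring
      simp only [e]
      rw [Finset.sum_comm, Finset.mul_sum]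
      refine Finset.sum_congr rfl fun j _ => ?_
      rw [Finset.sum_comm]
      simp only [← Finset.sum_mul, sum_sg_sg]
      simp
    rw [this]
    gcongr
    calc ∑ j, ‖φ j‖ ^ 2 ≤ ∑ j : J, b ^ 2 := by
          refine Finset.sum_le_sum fun j _ => ?_
          have := hφ j
          gcongr
      _ = _ := by simp
  have h3 : ∑ ε, ‖Z ε‖ ≤ 2 ^ Fintype.card J * (b * Real.sqrt (Fintype.card J)) := by
    refine (abs_le_of_sq_le_sq' ?_ (by positivity)).2
    have cs := sq_sum_le_card_mul_sum_sq (s := Finset.univ) (f := fun ε => ‖Z ε‖)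
    refine cs.trans ?_
    rw [mul_pow, mul_pow, Real.sq_sqrt (by positivity)]
    simp only [Finset.card_univ, Fintype.card_pi, Fintype.card_bool, Finset.prod_const]
    push_cast
    calc _ ≤ (2:ℝ) ^ Fintype.card J * (2 ^ Fintype.card J * (Fintype.card J * b ^ 2)) := by gcongr
      _ = _ := by ring
  calc _ ≤ ∑ ε, a * ‖Z ε‖ := Finset.sum_le_sum fun ε _ => h1 ε
    _ = a * ∑ ε, ‖Z ε‖ := by rw [Finset.mul_sum]
    _ ≤ a * (2 ^ Fintype.card J * (b * Real.sqrt (Fintype.card J))) := by gcongr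
    _ = _ := by ring

end rad
section dev
variable {α : Type*} [Fintype α] [Nonempty α]

lemma hoeff_step (y : α → ℝ) (c t : ℝ) (hc : 0 < c) (hy : ∀ a b, |y a - y b| ≤ c) :
    ∑ a, Real.exp (t * y a) ≤ Fintype.card α *
      Real.exp (t * ((∑ a, y a) / Fintype.card α) + t ^ 2 * c ^ 2 / 2) := by
  have hN : (0:ℝ) < Fintype.card α := by exact_mod_cast Fintype.card_pos
  set m := (∑ a, y a) / Fintype.card α with hm
  have hsum : ∑ a, (y a - m) = 0 := by
    rw [Finset.sum_sub_distrib]; simp [hm]; field_simp; simp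
  have hz : ∀ a, |y a - m| ≤ c := by
    intro a
    have : y a - m = (∑ b, (y a - y b)) / Fintype.card α := by
      rw [Finset.sum_sub_distrib]; simp [hm]; field_simp
    rw [this, abs_div, abs_of_pos hN, div_le_iff₀ hN]
    refine (Finset.abs_sum_le_sum_abs _ _).trans ?_
    refine (Finset.sum_le_sum fun b _ => hy a b).trans ?_
    simp [mul_comm]
  have hpt : ∀ a, Real.exp (t * (y a - m)) ≤
      Real.cosh (t * c) + (y a - m) * (Real.sinh (t * c) / c) := by
    intro a
    set z := y a - m
    have h := abs_le.mp (hz a)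
    have := convexOn_exp.2 (Set.mem_univ (t * c)) (Set.mem_univ (-(t * c)))
      (show 0 ≤ (c + z) / (2 * c) from div_nonneg (by linarith [h.1]) (by positivity))
      (show 0 ≤ (c - z) / (2 * c) from div_nonneg (by linarith [h.2]) (by positivity))
      (by field_simp; ring)
    simp only [smul_eq_mul] at this
    have e1 : (c + z) / (2 * c) * (t * c) + (c - z) / (2 * c) * -(t * c) = t * z := by
      field_simp; ring
    rw [e1] at this
    refine this.trans (le_of_eq ?_)
    rw [Real.cosh_eq, Real.sinh_eq]
    field_simp; ring
  have h2 : ∑ a, Real.exp (t * (y a - m)) ≤ Fintype.card α * Real.exp (t ^ 2 * c ^ 2 / 2) := by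
    refine (Finset.sum_le_sum fun a _ => hpt a).trans ?_
    rw [Finset.sum_add_distrib, ← Finset.sum_mul, hsum]
    simp only [Finset.sum_const, Finset.card_univ, nsmul_eq_mul, zero_mul, add_zero]
    have := Real.cosh_le_exp_half_sq (t * c)
    rw [mul_pow] at this
    gcongr
  have h3 : ∑ a, Real.exp (t * y a) = Real.exp (t * m) * ∑ a, Real.exp (t * (y a - m)) := by
    rw [Finset.mul_sum]
    refine Finset.sum_congr rfl fun a _ => ?_
    rw [← Real.exp_add]; congr 1; ring
  rw [h3, Real.exp_add]
  calc _ ≤ Real.exp (t * m) * (Fintype.card α * Real.exp (t ^ 2 * c ^ 2 / 2)) := by gcongr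
    _ = _ := by ring

lemma sum_cons (n : ℕ) (G : (Fin (n + 1) → α) → ℝ) :
    ∑ ω, G ω = ∑ ω' : Fin n → α, ∑ a, G (Fin.cons a ω') := by
  rw [← (Fin.consEquiv (fun _ => α)).sum_comp, Fintype.sum_prod_type, Finset.sum_comm]
  rfl

lemma mcd_mgf (n : ℕ) (F : (Fin n → α) → ℝ) (c t : ℝ) (hc : 0 < c)
    (hF : ∀ ω j a, |F ω - F (Function.update ω j a)| ≤ c) :
    ∑ ω, Real.exp (t * F ω) ≤ (Fintype.card α : ℝ) ^ n *
      Real.exp (t * ((∑ ω, F ω) / (Fintype.card α : ℝ) ^ n) + n * (t ^ 2 * c ^ 2 / 2)) := by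
  have hN : (0:ℝ) < Fintype.card α := by exact_mod_cast Fintype.card_pos
  induction n with
  | zero => simp
  | succ n ih =>
    set H : (Fin n → α) → ℝ := fun ω' => (∑ a, F (Fin.cons a ω')) / Fintype.card α with hH
    have hHb : ∀ ω j a, |H ω - H (Function.update ω j a)| ≤ c := by
      intro ω j a
      simp only [hH]
      rw [← sub_div, ← Finset.sum_sub_distrib, abs_div, abs_of_pos hN, div_le_iff₀ hN]
      refine (Finset.abs_sum_le_sum_abs _ _).trans ?_
      refine (Finset.sum_le_sum (g := fun _ => c) fun b _ => ?_).trans (by simp [mul_comm])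
      rw [Fin.cons_update]
      exact hF _ _ _
    have h1 : ∀ ω', ∑ a, Real.exp (t * F (Fin.cons a ω')) ≤
        Fintype.card α * Real.exp (t * H ω' + t ^ 2 * c ^ 2 / 2) := by
      intro ω'
      refine hoeff_step (fun a => F (Fin.cons a ω')) c t hc fun a b => ?_
      have := hF (Fin.cons a ω') 0 b
      rwa [Fin.update_cons_zero] at this
    rw [sum_cons]
    refine (Finset.sum_le_sum fun ω' _ => h1 ω').trans ?_
    have := ih H hHb
    have e : (∑ ω, F ω) / (Fintype.card α : ℝ) ^ (n+1) = (∑ ω, H ω) / (Fintype.card α : ℝ) ^ n := by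
      rw [sum_cons, ← Finset.sum_div, div_div, pow_succ']
    rw [e]
    simp only [Real.exp_add _ (t ^ 2 * c ^ 2 / 2), ← Finset.mul_sum, ← Finset.sum_mul]
    calc _ ≤ (Fintype.card α : ℝ) * (((Fintype.card α : ℝ) ^ n *
      Real.exp (t * ((∑ ω, H ω) / (Fintype.card α : ℝ) ^ n) + n * (t ^ 2 * c ^ 2 / 2))) *
        Real.exp (t ^ 2 * c ^ 2 / 2)) := by gcongr
      _ = _ := by
        rw [mul_assoc, ← Real.exp_add, pow_succ' _ n, mul_assoc]
        push_cast
        ring_nf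

lemma sum_coord (n : ℕ) (j : Fin n) (g : α → ℝ) :
    ∑ ω : Fin n → α, g (ω j) = (Fintype.card α : ℝ) ^ n * ((∑ a, g a) / Fintype.card α) := by
  have hN : (0:ℝ) < Fintype.card α := by exact_mod_cast Fintype.card_pos
  have hinv : Function.Involutive
      (fun p : α × (Fin n → α) => (p.2 j, Function.update p.2 j p.1)) := by
    rintro ⟨a, ω⟩
    simp
  have h := Equiv.sum_comp hinv.toPerm (fun p : α × (Fin n → α) => g p.1)
  simp only [Function.Involutive.coe_toPerm] at h
  rw [Fintype.sum_prod_type, Fintype.sum_prod_type] at h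
  simp only [Finset.sum_const, Finset.card_univ, nsmul_eq_mul, Fintype.card_pi,
    Finset.prod_const, Fintype.card_fin, ← Finset.mul_sum] at h
  push_cast at h
  field_simp
  linarith

lemma symm_sel {ι : Type*} (n : ℕ) (f : ι → α → ℝ) (B : ℝ)
    (hB : ∀ x : Fin n → α, Rad (fun i j => f i (x j)) B) (s : (Fin n → α) → ι) :
    ∑ ω : Fin n → α, ∑ j, ((∑ a, f (s ω) a) / Fintype.card α - f (s ω) (ω j)) ≤
      (Fintype.card α : ℝ) ^ n * (2 * B) := by
  classical
  have hN : (0:ℝ) < Fintype.card α := by exact_mod_cast Fintype.card_pos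
  set Q : (Fin n → α) × (Fin n → α) → ℝ := fun p => ∑ j, (f (s p.1) (p.2 j) - f (s p.1) (p.1 j))
    with hQ
  have h1 : ∑ p, Q p = (Fintype.card α : ℝ) ^ n *
      ∑ ω : Fin n → α, ∑ j, ((∑ a, f (s ω) a) / Fintype.card α - f (s ω) (ω j)) := by
    rw [Fintype.sum_prod_type, Finset.mul_sum]
    refine Finset.sum_congr rfl fun ω _ => ?_
    simp only [hQ]
    rw [Finset.sum_comm, Finset.mul_sum]
    refine Finset.sum_congr rfl fun j _ => ?_
    rw [Finset.sum_sub_distrib, sum_coord, mul_sub]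
    simp
  set τ : (Fin n → Bool) → (Fin n → α) × (Fin n → α) → (Fin n → α) × (Fin n → α) :=
    fun ε p => (fun j => if ε j then p.1 j else p.2 j, fun j => if ε j then p.2 j else p.1 j) with hτ
  have hτi : ∀ ε, Function.Involutive (τ ε) := by
    rintro ε ⟨ω, ω'⟩
    simp only [hτ, Prod.mk.injEq]
    constructor <;> funext j <;> cases ε j <;> simp
  have h2 : ∀ ε, ∑ p, Q (τ ε p) = ∑ p, Q p := fun ε =>
    Equiv.sum_comp (hτi ε).toPerm Q
  have h3 : ∀ ε p, Q (τ ε p) =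
      ∑ j, sg (ε j) * (f (s (τ ε p).1) (p.2 j) + - f (s (τ ε p).1) (p.1 j)) := by
    intro ε p
    simp only [hQ]
    refine Finset.sum_congr rfl fun j _ => ?_
    have a1 : (τ ε p).1 j = if ε j then p.1 j else p.2 j := rfl
    have a2 : (τ ε p).2 j = if ε j then p.2 j else p.1 j := rfl
    rw [a1, a2]
    cases ε j <;> simp [sg] <;> ring
  have h4 : ∀ p, ∑ ε, Q (τ ε p) ≤ 2 ^ n * (2 * B) := by
    intro p
    simp only [h3]
    have := ((hB p.2).add (hB p.1).neg) (fun ε => s (τ ε p).1)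
    rw [Fintype.card_fin] at this
    refine this.trans (le_of_eq (by ring))
  have h5 : (2:ℝ) ^ n * ∑ p, Q p ≤
      2 ^ n * ((Fintype.card α : ℝ) ^ n * ((Fintype.card α : ℝ) ^ n * (2 * B))) := by
    calc (2:ℝ) ^ n * ∑ p, Q p = ∑ ε : Fin n → Bool, ∑ p, Q (τ ε p) := by
          simp [h2]
      _ = ∑ p, ∑ ε, Q (τ ε p) := Finset.sum_comm
      _ ≤ ∑ p : (Fin n → α) × (Fin n → α), 2 ^ n * (2 * B) := Finset.sum_le_sum fun p _ => h4 p
      _ = _ := by simp; ring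
  have h6 := le_of_mul_le_mul_left h5 (by positivity)
  rw [h1] at h6
  exact le_of_mul_le_mul_left h6 (by positivity)

lemma dev_one {ι : Type*} (n : ℕ) (hn : 1 ≤ n) (f : ι → α → ℝ) (B t : ℝ) (ht : 0 ≤ t)
    (hosc : ∀ i a b, f i a - f i b ≤ 1)
    (hB : ∀ x : Fin n → α, Rad (fun i j => f i (x j)) B)
    (bad : Finset (Fin n → α))
    (hbad : ∀ ω ∈ bad, ∃ i, 2 * B / n + t <
      (∑ a, f i a) / Fintype.card α - (∑ j, f i (ω j)) / n) :
    (bad.card : ℝ) ≤ (Fintype.card α : ℝ) ^ n * Real.exp (-(n * t ^ 2 / 2)) := by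
  classical
  have hN : (0:ℝ) < Fintype.card α := by exact_mod_cast Fintype.card_pos
  have hn' : (0:ℝ) < n := by exact_mod_cast hn
  rcases bad.eq_empty_or_nonempty with rfl | ⟨ω₀, hω₀⟩
  · simp; positivity
  obtain ⟨i₀, -⟩ := hbad ω₀ hω₀
  have : ∀ ω, ∃ i, ω ∈ bad → 2 * B / n + t <
      (∑ a, f i a) / Fintype.card α - (∑ j, f i (ω j)) / n := by
    intro ω
    by_cases h : ω ∈ bad
    · obtain ⟨i, hi⟩ := hbad ω h
      exact ⟨i, fun _ => hi⟩
    · exact ⟨i₀, fun h' => absurd h' h⟩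
  choose I hI using this
  set Y : (Fin n → α) → (Fin n → α) → ℝ := fun ω ω' =>
    (∑ a, f (I ω') a) / Fintype.card α - (∑ j, f (I ω') (ω j)) / n with hY
  set F : (Fin n → α) → ℝ := fun ω => ⨆ ω', Y ω ω' with hF
  have hle : ∀ ω ω', Y ω ω' ≤ F ω := fun ω ω' =>
    le_ciSup (Set.finite_range (Y ω)).bddAbove ω'
  have hex : ∀ ω, ∃ ω', Y ω ω' = F ω := fun ω => exists_eq_ciSup_of_finite
  choose T hT using hex
  have hdiff : ∀ ω j a ω', Y ω ω' - Y (Function.update ω j a) ω' ≤ 1 / n := by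
    intro ω j a ω'
    have e : Y ω ω' - Y (Function.update ω j a) ω' = (f (I ω') a - f (I ω') (ω j)) / n := by
      simp only [hY]
      have : ∑ k, f (I ω') (Function.update ω j a k) - ∑ k, f (I ω') (ω k) =
          f (I ω') a - f (I ω') (ω j) := by
        rw [← Finset.sum_sub_distrib, Finset.sum_eq_single j]
        · simp
        · intro k _ hk; simp [hk]
        · simp
      rw [← this]; ring
    rw [e]
    gcongr
    exact hosc _ _ _
  have hFd : ∀ ω j a, |F ω - F (Function.update ω j a)| ≤ 1 / n := by
    intro ω j a
    have one : ∀ ω j a, F ω - F (Function.update ω j a) ≤ 1 / n := by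
      intro ω j a
      have := hdiff ω j a (T ω)
      rw [hT] at this
      linarith [hle (Function.update ω j a) (T ω)]
    rw [abs_le]
    refine ⟨?_, one ω j a⟩
    have := one (Function.update ω j a) j (ω j)
    simp only [Function.update_idem, Function.update_eq_self] at this
    linarith
  have hmean : (∑ ω, F ω) / (Fintype.card α : ℝ) ^ n ≤ 2 * B / n := by
    have := symm_sel n f B hB (fun ω => I (T ω))
    have e : ∑ ω : Fin n → α, ∑ j, ((∑ a, f (I (T ω)) a) / Fintype.card α - f (I (T ω)) (ω j))
        = n * ∑ ω, F ω := by
      rw [Finset.mul_sum]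
      refine Finset.sum_congr rfl fun ω _ => ?_
      rw [← hT ω, Finset.sum_sub_distrib]
      simp only [hY, Finset.sum_const, Finset.card_univ, Fintype.card_fin, nsmul_eq_mul]
      field_simp
    rw [e] at this
    rw [div_le_div_iff₀ (by positivity) hn']
    linarith
  have hmgf := mcd_mgf n F (1 / n) (n * t) (by positivity) hFd
  have hlow : bad.card * Real.exp (n * t * (2 * B / n + t)) ≤ ∑ ω, Real.exp (n * t * F ω) := by
    calc _ = ∑ ω ∈ bad, Real.exp (n * t * (2 * B / n + t)) := by simp
      _ ≤ ∑ ω ∈ bad, Real.exp (n * t * F ω) := by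
        refine Finset.sum_le_sum fun ω hω => ?_
        have := (hI ω hω).le.trans (hle ω ω)
        gcongr
      _ ≤ _ := Finset.sum_le_sum_of_subset_of_nonneg (Finset.subset_univ _)
        fun _ _ _ => (Real.exp_pos _).le
  have h2 : bad.card * Real.exp (n * t * (2 * B / n + t)) ≤ (Fintype.card α : ℝ) ^ n *
      Real.exp (n * t * (2 * B / n) + n * ((n * t) ^ 2 * (1 / n) ^ 2 / 2)) := by
    refine hlow.trans (hmgf.trans ?_)
    gcongr
  have e2 : n * t * (2 * B / n) + n * ((n * t) ^ 2 * (1 / n) ^ 2 / 2) =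
      -(n * t ^ 2 / 2) + n * t * (2 * B / n + t) := by
    field_simp; ring
  rw [e2, Real.exp_add, ← mul_assoc] at h2
  exact le_of_mul_le_mul_right h2 (Real.exp_pos _)

end dev
section gauss
variable {d : ℕ}

lemma posDef_of {S : Matrix (Fin d) (Fin d) ℝ} {ζ : ℝ} (hζ : 0 < ζ) (hs : S.IsSymm)
    (hq : ∀ v : EuclideanSpace ℝ (Fin d), v ≠ 0 →
      ζ * ‖v‖ ^ 2 < ∑ i, ∑ j, v i * S i j * v j) : S.PosDef := by
  rw [Matrix.posDef_iff_dotProduct_mulVec]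
  refine ⟨by rw [Matrix.IsHermitian, Matrix.conjTranspose_eq_transpose_of_trivial]; exact hs, ?_⟩
  intro x hx
  have := hq (WithLp.toLp 2 x) (by simpa using hx)
  refine lt_of_le_of_lt (by positivity) (this.trans_le (le_of_eq ?_))
  simp only [dotProduct, Matrix.mulVec, Finset.mul_sum]
  refine Finset.sum_congr rfl fun _ _ => Finset.sum_congr rfl fun _ _ => ?_
  simp; ring

/-- `P v` as a Euclidean vector. -/
noncomputable def mv (P : Matrix (Fin d) (Fin d) ℝ) (v : EuclideanSpace ℝ (Fin d)) :
    EuclideanSpace ℝ (Fin d) := WithLp.toLp 2 (P.mulVec v.ofLp)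

lemma mv_apply (P : Matrix (Fin d) (Fin d) ℝ) (v : EuclideanSpace ℝ (Fin d)) (i : Fin d) :
    mv P v i = ∑ j, P i j * v j := rfl

lemma inner_mv (P : Matrix (Fin d) (Fin d) ℝ) (v w : EuclideanSpace ℝ (Fin d)) :
    inner ℝ w (mv P v) = ∑ i, ∑ j, w i * P i j * v j := by
  rw [PiLp.inner_apply]
  refine Finset.sum_congr rfl fun i _ => ?_
  rw [mv_apply]
  simp only [RCLike.inner_apply, conj_trivial, Finset.sum_mul]
  refine Finset.sum_congr rfl fun _ _ => ?_
  ring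

lemma mv_inv_bound {S : Matrix (Fin d) (Fin d) ℝ} {ζ : ℝ} (hζ : 0 < ζ) (hs : S.IsSymm)
    (hq : ∀ v : EuclideanSpace ℝ (Fin d), v ≠ 0 →
      ζ * ‖v‖ ^ 2 < ∑ i, ∑ j, v i * S i j * v j) (v : EuclideanSpace ℝ (Fin d)) :
    ‖mv S⁻¹ v‖ ≤ 1 / ζ * ‖v‖ ∧ 0 ≤ inner ℝ v (mv S⁻¹ v) := by
  have hP := posDef_of hζ hs hq
  set w := mv S⁻¹ v with hw
  have hSw : mv S w = v := by
    have hu : IsUnit S.det := hP.det_pos.ne'.isUnit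
    simp [hw, mv, Matrix.mulVec_mulVec, Matrix.mul_nonsing_inv _ hu]
  have hq' : ζ * ‖w‖ ^ 2 ≤ inner ℝ w v := by
    conv_rhs => rw [← hSw, inner_mv]
    by_cases h : w = 0
    · simp [h]
    · exact (hq w h).le
  constructor
  · have h2 := hq'.trans (real_inner_le_norm w v)
    rw [one_div, inv_mul_eq_div, le_div_iff₀ hζ]
    by_cases h : ‖w‖ = 0
    · rw [h]; simp
    · have : 0 < ‖w‖ := lt_of_le_of_ne (norm_nonneg _) (Ne.symm h)
      nlinarith
  · rw [real_inner_comm]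
    exact le_trans (by positivity) hq'

lemma quad_expand {P : Matrix (Fin d) (Fin d) ℝ} (hs : P.IsSymm)
    (x μ : EuclideanSpace ℝ (Fin d)) :
    -(∑ i, ∑ j, (x - μ) i * P i j * (x - μ) j) / 2 =
      inner ℝ (WithLp.toLp 2 (fun q : Fin d × Fin d => -(1/2) * P q.1 q.2) :
          EuclideanSpace ℝ (Fin d × Fin d))
        (WithLp.toLp 2 (fun q : Fin d × Fin d => x q.1 * x q.2)) +
      inner ℝ (mv P μ) x + inner ℝ (-(1/2) * inner ℝ μ (mv P μ)) (1:ℝ) := by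
  have h1 : inner ℝ (WithLp.toLp 2 (fun q : Fin d × Fin d => -(1/2) * P q.1 q.2) :
          EuclideanSpace ℝ (Fin d × Fin d))
        (WithLp.toLp 2 (fun q : Fin d × Fin d => x q.1 * x q.2)) = -(1/2) * inner ℝ x (mv P x) := by
    rw [PiLp.inner_apply, inner_mv, Fintype.sum_prod_type, Finset.mul_sum]
    refine Finset.sum_congr rfl fun _ _ => ?_
    rw [Finset.mul_sum]
    refine Finset.sum_congr rfl fun _ _ => ?_
    simp; ring
  have h2 : inner ℝ μ (mv P x) = inner ℝ x (mv P μ) := by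
    rw [inner_mv, inner_mv, Finset.sum_comm]
    refine Finset.sum_congr rfl fun i _ => Finset.sum_congr rfl fun j _ => ?_
    rw [hs.apply i j]; ring
  have h3 : mv P (x - μ) = mv P x - mv P μ := by
    simp [mv, Matrix.mulVec_sub]
  rw [h1, ← inner_mv, h3, inner_sub_left, inner_sub_right, inner_sub_right, h2,
    real_inner_comm x (mv P μ)]
  simp
  ring

lemma frob {P : Matrix (Fin d) (Fin d) ℝ} {a : ℝ} (ha : 0 ≤ a)
    (hP : ∀ v, ‖mv P v‖ ≤ a * ‖v‖) :
    ‖(WithLp.toLp 2 (fun q : Fin d × Fin d => -(1/2) * P q.1 q.2) :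
          EuclideanSpace ℝ (Fin d × Fin d))‖ ≤ a / 2 * Real.sqrt d := by
  refine (abs_le_of_sq_le_sq' ?_ (by positivity)).2
  rw [EuclideanSpace.real_norm_sq_eq, mul_pow, Real.sq_sqrt (by positivity),
    Fintype.sum_prod_type, Finset.sum_comm]
  have : ∀ j : Fin d, ∑ i, P i j ^ 2 ≤ a ^ 2 := by
    intro j
    have h := hP (EuclideanSpace.single j 1)
    rw [EuclideanSpace.norm_single, norm_one, mul_one] at h
    have h' : ‖mv P (EuclideanSpace.single j 1)‖ ^ 2 ≤ a ^ 2 := by gcongr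
    rw [EuclideanSpace.real_norm_sq_eq] at h'
    refine le_trans (le_of_eq ?_) h'
    refine Finset.sum_congr rfl fun i _ => ?_
    simp [mv_apply]
  calc _ = ∑ j : Fin d, (1/4) * ∑ i, P i j ^ 2 := by
        refine Finset.sum_congr rfl fun j _ => ?_
        rw [Finset.mul_sum]
        refine Finset.sum_congr rfl fun i _ => ?_
        simp; ring
    _ ≤ ∑ j : Fin d, (1/4) * a ^ 2 := Finset.sum_le_sum fun j _ => by have := this j; gcongr
    _ = _ := by simp; ring

lemma feat_norm (x : EuclideanSpace ℝ (Fin d)) :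
    ‖(WithLp.toLp 2 (fun q : Fin d × Fin d => x q.1 * x q.2) :
          EuclideanSpace ℝ (Fin d × Fin d))‖ = ‖x‖ ^ 2 := by
  have : ‖(WithLp.toLp 2 (fun q : Fin d × Fin d => x q.1 * x q.2) :
          EuclideanSpace ℝ (Fin d × Fin d))‖ ^ 2 = (‖x‖ ^ 2) ^ 2 := by
    rw [EuclideanSpace.real_norm_sq_eq, EuclideanSpace.real_norm_sq_eq, Fintype.sum_prod_type,
      sq (∑ i, x.ofLp i ^ 2), Finset.sum_mul_sum]
    simp [mul_pow]
  exact (sq_eq_sq₀ (by positivity) (by positivity)).mp this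

lemma rad_quad {J ι : Type*} [Fintype J] [DecidableEq J] (hd : 1 ≤ d)
    (P : ι → Matrix (Fin d) (Fin d) ℝ) (μ : ι → EuclideanSpace ℝ (Fin d))
    (x : J → EuclideanSpace ℝ (Fin d)) {a ν R : ℝ} (ha : 0 ≤ a) (hν : 0 ≤ ν) (hR : 0 ≤ R)
    (hs : ∀ i, (P i).IsSymm) (hP : ∀ i v, ‖mv (P i) v‖ ≤ a * ‖v‖)
    (hμ : ∀ i, ‖μ i‖ ≤ ν) (hx : ∀ j, ‖x j‖ ≤ R) :
    Rad (fun i j => -(∑ k, ∑ l, (x j - μ i) k * P i k l * (x j - μ i) l) / 2)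
      (a * (R + ν) ^ 2 / 2 * (Real.sqrt d * Real.sqrt (Fintype.card J))) := by
  simp only [quad_expand (hs _)]
  have hmv : ∀ i, ‖mv (P i) (μ i)‖ ≤ a * ν := fun i =>
    (hP i _).trans (by have := hμ i; gcongr)
  have h1 := Rad.linear (fun i => (WithLp.toLp 2 (fun q : Fin d × Fin d => -(1/2) * P i q.1 q.2) :
          EuclideanSpace ℝ (Fin d × Fin d)))
      (fun j => (WithLp.toLp 2 (fun q : Fin d × Fin d => x j q.1 * x j q.2) :
          EuclideanSpace ℝ (Fin d × Fin d))) (a := a / 2 * Real.sqrt d) (b := R ^ 2)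
      (by positivity) (by positivity) (fun i => frob ha (hP i))
      (fun j => by rw [feat_norm]; have := hx j; gcongr)
  have h2 := Rad.linear (fun i => mv (P i) (μ i)) x (a := a * ν) (b := R)
      (by positivity) hR hmv hx
  have h3 := Rad.linear (fun i => -(1/2) * inner ℝ (μ i) (mv (P i) (μ i))) (fun _ : J => (1:ℝ))
      (a := a * ν ^ 2 / 2) (b := 1) (by positivity) (by positivity)
      (fun i => by
        rw [norm_mul]
        have := (norm_inner_le_norm (𝕜 := ℝ) (μ i) (mv (P i) (μ i))).trans
          (mul_le_mul (hμ i) (hmv i) (norm_nonneg _) hν)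
        have e : ‖(-(1/2) : ℝ)‖ = 1/2 := by norm_num
        rw [e]
        linarith) (fun j => by simp)
  refine ((h1.add h2).add h3).mono ?_
  have hsd : 1 ≤ Real.sqrt d := by
    rw [Real.one_le_sqrt]; exact_mod_cast hd
  set n := Real.sqrt (Fintype.card J)
  have hn : 0 ≤ n := Real.sqrt_nonneg _
  have : a * (R + ν) ^ 2 / 2 * (Real.sqrt d * n) - (a / 2 * Real.sqrt d * R ^ 2 * n + a * ν * R * n
     + a * ν ^ 2 / 2 * 1 * n) = (a * ν * R * n + a * ν ^ 2 / 2 * n) * (Real.sqrt d - 1) := by ring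
  have h0 : 0 ≤ (a * ν * R * n + a * ν ^ 2 / 2 * n) * (Real.sqrt d - 1) :=
    mul_nonneg (by positivity) (by linarith)
  linarith

end gauss

lemma abs_exp_sub_le {a b : ℝ} (ha : a ≤ 0) (hb : b ≤ 0) :
    |Real.exp a - Real.exp b| ≤ |a - b| := by
  wlog h : b ≤ a generalizing a b
  · rw [abs_sub_comm, abs_sub_comm a]
    exact this hb ha (le_of_not_ge h)
  rw [abs_of_nonneg (by simpa using h), abs_of_nonneg (by linarith)]
  have h1 : Real.exp b = Real.exp a * Real.exp (b - a) := by rw [← Real.exp_add]; congr 1; ring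
  have h2 := Real.add_one_le_exp (b - a)
  have h3 : Real.exp a ≤ 1 := by simpa using ha
  have h4 := Real.exp_pos a
  rw [h1]
  nlinarith
section mix
variable {d K : ℕ}

/-- Normalised weights with determinants absorbed. -/
noncomputable def wt (π : Fin K → ℝ) (S : Fin K → Matrix (Fin d) (Fin d) ℝ) (l : Fin K) : ℝ :=
  (π l * (S l).det ^ (-(1 : ℝ) / 2)) / ∑ m, π m * (S m).det ^ (-(1 : ℝ) / 2)

/-- Exponential factor. -/
noncomputable def ex (μ : Fin K → EuclideanSpace ℝ (Fin d)) (S : Fin K → Matrix (Fin d) (Fin d) ℝ)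
    (l : Fin K) (x : EuclideanSpace ℝ (Fin d)) : ℝ :=
  Real.exp (-(∑ i, ∑ j, (x - μ l) i * (S l)⁻¹ i j * (x - μ l) j) / 2)

variable {ξ ζ ν R : ℝ} {π : Fin K → ℝ} {μ : Fin K → EuclideanSpace ℝ (Fin d)}
  {S : Fin K → Matrix (Fin d) (Fin d) ℝ}

lemma inPhi.low (h : inPhi ξ ζ ν π μ S) (k : Fin K) :
    ∀ v : EuclideanSpace ℝ (Fin d), v ≠ 0 →
      ζ * ‖v‖ ^ 2 < ∑ i, ∑ j, v i * S k i j * v j :=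
  fun v hv => ((h.2.2.2.2 k).2 v hv).1

lemma inPhi.aw (hζ : 0 < ζ) (h : inPhi ξ ζ ν π μ S) (l : Fin K) :
    0 < π l * (S l).det ^ (-(1 : ℝ) / 2) :=
  mul_pos (h.1 l) (Real.rpow_pos_of_pos (posDef_of hζ (h.2.2.2.2 l).1 (h.low l)).det_pos _)

lemma inPhi.awsum (hζ : 0 < ζ) (hK : 0 < K) (h : inPhi ξ ζ ν π μ S) :
    0 < ∑ m, π m * (S m).det ^ (-(1 : ℝ) / 2) :=
  Finset.sum_pos (fun l _ => h.aw hζ l) ⟨⟨0, hK⟩, Finset.mem_univ _⟩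

lemma wt_pos (hζ : 0 < ζ) (hK : 0 < K) (h : inPhi ξ ζ ν π μ S) (l : Fin K) : 0 < wt π S l :=
  div_pos (h.aw hζ l) (h.awsum hζ hK)

lemma wt_sum (hζ : 0 < ζ) (hK : 0 < K) (h : inPhi ξ ζ ν π μ S) : ∑ l, wt π S l = 1 := by
  simp only [wt]
  rw [← Finset.sum_div, div_self (h.awsum hζ hK).ne']

lemma wt_le (hζ : 0 < ζ) (hK : 0 < K) (h : inPhi ξ ζ ν π μ S) (l : Fin K) : wt π S l ≤ 1 := by
  rw [← wt_sum hζ hK h]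
  exact Finset.single_le_sum (f := wt π S) (fun m _ => (wt_pos hζ hK h m).le) (Finset.mem_univ l)

lemma expo_nonpos (hζ : 0 < ζ) (h : inPhi ξ ζ ν π μ S) (l : Fin K)
    (x : EuclideanSpace ℝ (Fin d)) :
    -(∑ i, ∑ j, (x - μ l) i * (S l)⁻¹ i j * (x - μ l) j) / 2 ≤ 0 := by
  have := (mv_inv_bound hζ (h.2.2.2.2 l).1 (h.low l) (x - μ l)).2
  rw [inner_mv] at this
  linarith

lemma ex_le (hζ : 0 < ζ) (h : inPhi ξ ζ ν π μ S) (l : Fin K)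
    (x : EuclideanSpace ℝ (Fin d)) : ex μ S l x ≤ 1 := by
  rw [ex, Real.exp_le_one_iff]
  exact expo_nonpos hζ h l x

lemma le_ex (hζ : 0 < ζ) (h : inPhi ξ ζ ν π μ S) (l : Fin K)
    (x : EuclideanSpace ℝ (Fin d)) (hx : ‖x‖ ≤ R) :
    Real.exp (-(1 / ζ * (R + ν) ^ 2 / 2)) ≤ ex μ S l x := by
  rw [ex, Real.exp_le_exp, ← inner_mv]
  have h1 := (mv_inv_bound hζ (h.2.2.2.2 l).1 (h.low l) (x - μ l)).1
  have h2 := real_inner_le_norm (x - μ l) (mv (S l)⁻¹ (x - μ l))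
  have h3 : ‖x - μ l‖ ≤ R + ν := (norm_sub_le _ _).trans (add_le_add hx (h.2.2.2.1 l))
  have h4 : ‖x - μ l‖ * ‖mv (S l)⁻¹ (x - μ l)‖ ≤ 1 / ζ * (R + ν) ^ 2 := by
    calc _ ≤ ‖x - μ l‖ * (1 / ζ * ‖x - μ l‖) := by gcongr
      _ = 1 / ζ * ‖x - μ l‖ ^ 2 := by ring
      _ ≤ _ := by gcongr
  linarith

lemma resp_eq (hζ : 0 < ζ) (hK : 0 < K) (h : inPhi ξ ζ ν π μ S) (k : Fin K)
    (x : EuclideanSpace ℝ (Fin d)) :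
    resp π μ S k x = (wt π S k * ex μ S k x) * (∑ l, wt π S l * ex μ S l x)⁻¹ := by
  have hW := h.awsum hζ hK
  set W := ∑ m, π m * (S m).det ^ (-(1 : ℝ) / 2) with hWd
  set c : ℝ := (2 * Real.pi) ^ (-(d : ℝ) / 2) with hc
  have hcp : 0 < c := by positivity
  have e : ∀ l, π l * gaussDensity x (μ l) (S l) = (c * W) * (wt π S l * ex μ S l x) := by
    intro l
    simp only [gaussDensity, wt, ex, ← hc, ← hWd]
    field_simp
  simp only [resp, e, ← Finset.mul_sum]
  rw [mul_div_mul_left _ _ (by positivity), div_eq_mul_inv]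

lemma den_low (hζ : 0 < ζ) (hK : 0 < K) (h : inPhi ξ ζ ν π μ S)
    (x : EuclideanSpace ℝ (Fin d)) (hx : ‖x‖ ≤ R) :
    Real.exp (-(1 / ζ * (R + ν) ^ 2 / 2)) ≤ ∑ l, wt π S l * ex μ S l x := by
  calc _ = ∑ l, wt π S l * Real.exp (-(1 / ζ * (R + ν) ^ 2 / 2)) := by
        rw [← Finset.sum_mul, wt_sum hζ hK h, one_mul]
    _ ≤ _ := Finset.sum_le_sum fun l _ =>
        mul_le_mul_of_nonneg_left (le_ex hζ h l x hx) (wt_pos hζ hK h l).le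

lemma num_pos (hζ : 0 < ζ) (hK : 0 < K) (h : inPhi ξ ζ ν π μ S) (k : Fin K)
    (x : EuclideanSpace ℝ (Fin d)) : 0 < wt π S k * ex μ S k x :=
  mul_pos (wt_pos hζ hK h k) (Real.exp_pos _)

lemma num_le (hζ : 0 < ζ) (hK : 0 < K) (h : inPhi ξ ζ ν π μ S) (k : Fin K)
    (x : EuclideanSpace ℝ (Fin d)) : wt π S k * ex μ S k x ≤ 1 :=
  mul_le_one₀ (wt_le hζ hK h k) (Real.exp_pos _).le (ex_le hζ h k x)

lemma resp_mem (hζ : 0 < ζ) (hK : 0 < K) (h : inPhi ξ ζ ν π μ S) (k : Fin K)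
    (x : EuclideanSpace ℝ (Fin d)) : 0 ≤ resp π μ S k x ∧ resp π μ S k x ≤ 1 := by
  rw [resp_eq hζ hK h]
  have hp : ∀ l, 0 < wt π S l * ex μ S l x := fun l => num_pos hζ hK h l x
  have hs : wt π S k * ex μ S k x ≤ ∑ l, wt π S l * ex μ S l x :=
    Finset.single_le_sum (f := fun l => wt π S l * ex μ S l x)
      (fun m _ => (hp m).le) (Finset.mem_univ k)
  have := (hp k).trans_le hs
  refine ⟨mul_nonneg (hp k).le (inv_nonneg.mpr this.le), ?_⟩
  rw [← div_eq_mul_inv, div_le_one this]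
  exact hs

lemma K_le (hξ : 0 < ξ) (h : inPhi ξ ζ ν π μ S) : (K : ℝ) ≤ 1 / ξ := by
  rw [le_div_iff₀ hξ, ← h.2.1]
  calc (K : ℝ) * ξ = ∑ k : Fin K, ξ := by simp
    _ ≤ _ := Finset.sum_le_sum fun k _ => (h.2.2.1 k).1.le

/-- Index type of the function class. -/
abbrev PhiIdx (d K : ℕ) (ξ ζ ν : ℝ) : Type :=
  {θ : (Fin K → ℝ) × (Fin K → EuclideanSpace ℝ (Fin d)) × (Fin K → Matrix (Fin d) (Fin d) ℝ) //
    inPhi ξ ζ ν θ.1 θ.2.1 θ.2.2} × Fin K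

/-- The constant of the theorem. -/
noncomputable def bigC (ξ ζ ν R : ℝ) : ℝ :=
  3 * Real.exp (1 / ζ * (R + ν) ^ 2 / 2) * (3 * (1 + 1 / ζ * (R + ν) ^ 2 / 2) +
    Real.exp (1 / ζ * (R + ν) ^ 2 / 2) ^ 2 * (1 / ξ * (3 * (1 + 1 / ζ * (R + ν) ^ 2 / 2))))

lemma rad_resp {J : Type*} [Fintype J] [DecidableEq J] (hd : 1 ≤ d) (hK : 0 < K)
    (hξ : 0 < ξ) (hζ : 0 < ζ) (hν : 0 < ν) (hR : 0 < R)
    (x : J → EuclideanSpace ℝ (Fin d)) (hx : ∀ j, ‖x j‖ ≤ R) :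
    Rad (fun (i : PhiIdx d K ξ ζ ν) j => resp i.1.1.1 i.1.1.2.1 i.1.1.2.2 i.2 (x j))
      (bigC ξ ζ ν R * (Real.sqrt d * Real.sqrt (Fintype.card J))) := by
  set M := 1 / ζ * (R + ν) ^ 2 / 2 with hM
  set r := Real.sqrt d * Real.sqrt (Fintype.card J) with hr
  have hM0 : 0 ≤ M := by positivity
  have hr0 : 0 ≤ r := by positivity
  have hE : 1 ≤ Real.exp M := by simpa using hM0
  -- exponent class, for any selection of component
  have hex : ∀ l : PhiIdx d K ξ ζ ν → Fin K, Rad (fun (i : PhiIdx d K ξ ζ ν) j =>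
      ex i.1.1.2.1 i.1.1.2.2 (l i) (x j)) (M * r) := by
    intro l
    have h := rad_quad hd (fun i : PhiIdx d K ξ ζ ν => (i.1.1.2.2 (l i))⁻¹)
      (fun i => i.1.1.2.1 (l i)) x (a := 1 / ζ) (ν := ν) (R := R) (by positivity) hν.le hR.le
      (fun i => by
        have := (i.1.2.2.2.2.2 (l i)).1
        rw [Matrix.IsSymm, Matrix.transpose_nonsing_inv, this])
      (fun i v => (mv_inv_bound hζ (i.1.2.2.2.2.2 (l i)).1 (i.1.2.low (l i)) v).1)
      (fun i => i.1.2.2.2.2.1 (l i)) hx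
    refine h.contract fun i i' j => ?_
    exact abs_exp_sub_le (expo_nonpos hζ i.1.2 _ _) (expo_nonpos hζ i'.1.2 _ _)
  have hwt : ∀ l : PhiIdx d K ξ ζ ν → Fin K, Rad (J := J) (fun (i : PhiIdx d K ξ ζ ν) j =>
      wt i.1.1.1 i.1.1.2.2 (l i)) r := by
    intro l
    have h := Rad.linear (J := J) (fun i : PhiIdx d K ξ ζ ν => wt i.1.1.1 i.1.1.2.2 (l i))
      (fun _ => (1:ℝ)) (a := 1) (b := 1) (by norm_num) (by norm_num)
      (fun i => by
        rw [Real.norm_eq_abs, abs_of_pos (wt_pos hζ hK i.1.2 _)]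
        exact wt_le hζ hK i.1.2 _) (fun j => by simp)
    simp only [RCLike.inner_apply, conj_trivial, one_mul] at h
    refine h.mono ?_
    have hsd : 1 ≤ Real.sqrt d := by
      rw [Real.one_le_sqrt]; exact_mod_cast hd
    exact le_mul_of_one_le_left (Real.sqrt_nonneg _) hsd
  have hnum : ∀ l : PhiIdx d K ξ ζ ν → Fin K, Rad (fun (i : PhiIdx d K ξ ζ ν) j =>
      wt i.1.1.1 i.1.1.2.2 (l i) * ex i.1.1.2.1 i.1.1.2.2 (l i) (x j)) (3 * (1 + M) * r) := by
    intro l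
    refine ((hwt l).mul (hex l) (b := 1) (by norm_num) ?_ ?_).mono (by linarith)
    · intro i j
      rw [abs_of_pos (wt_pos hζ hK i.1.2 _)]
      exact wt_le hζ hK i.1.2 _
    · intro i j
      rw [abs_of_pos (show 0 < ex _ _ _ _ from Real.exp_pos _)]
      exact ex_le hζ i.1.2 _ _
  have hden := Rad.sum (Finset.univ : Finset (Fin K))
    (u := fun l (i : PhiIdx d K ξ ζ ν) j =>
      wt i.1.1.1 i.1.1.2.2 l * ex i.1.1.2.1 i.1.1.2.2 l (x j))
    (fun l _ => hnum (fun _ => l))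
  have hdl : ∀ (i : PhiIdx d K ξ ζ ν) j, Real.exp (-M) ≤
      ∑ l, wt i.1.1.1 i.1.1.2.2 l * ex i.1.1.2.1 i.1.1.2.2 l (x j) :=
    fun i j => den_low hζ hK i.1.2 (x j) (hx j)
  have hinv : ∀ (i : PhiIdx d K ξ ζ ν) j,
      |(∑ l, wt i.1.1.1 i.1.1.2.2 l * ex i.1.1.2.1 i.1.1.2.2 l (x j))⁻¹| ≤ Real.exp M := by
    intro i j
    have h0 := (Real.exp_pos _).trans_le (hdl i j)
    rw [abs_of_pos (inv_pos.mpr h0)]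
    have := inv_anti₀ (Real.exp_pos _) (hdl i j)
    rwa [Real.exp_neg, inv_inv] at this
  have hdeninv := hden.lip (L := Real.exp M ^ 2)
    (u := fun (i : PhiIdx d K ξ ζ ν) j =>
      (∑ l, wt i.1.1.1 i.1.1.2.2 l * ex i.1.1.2.1 i.1.1.2.2 l (x j))⁻¹) (by positivity) (by
    intro i i' j
    have h0 := (Real.exp_pos _).trans_le (hdl i j)
    have h0' := (Real.exp_pos _).trans_le (hdl i' j)
    rw [inv_sub_inv h0.ne' h0'.ne', div_eq_mul_inv, abs_mul, mul_inv, abs_mul, mul_comm,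
      abs_sub_comm, sq]
    have h1 := hinv i j
    have h2 := hinv i' j
    gcongr)
  have hfin := (hnum (fun i => i.2)).mul hdeninv (b := Real.exp M) (Real.exp_pos _).le
    (fun i j => by
      rw [abs_of_pos (num_pos hζ hK i.1.2 _ _)]
      exact (num_le hζ hK i.1.2 _ _).trans hE) hinv
  have hfun : (fun (i : PhiIdx d K ξ ζ ν) j => resp i.1.1.1 i.1.1.2.1 i.1.1.2.2 i.2 (x j)) =
      fun i j => (wt i.1.1.1 i.1.1.2.2 i.2 * ex i.1.1.2.1 i.1.1.2.2 i.2 (x j)) *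
        (∑ l, wt i.1.1.1 i.1.1.2.2 l * ex i.1.1.2.1 i.1.1.2.2 l (x j))⁻¹ := by
    funext i j
    exact resp_eq hζ hK i.1.2 _ _
  rw [hfun]
  intro s
  have hKb : (K : ℝ) ≤ 1 / ξ := K_le hξ (s fun _ => true).1.2
  refine (hfin.mono ?_) s
  rw [Finset.card_univ, Fintype.card_fin]
  calc _ ≤ 3 * Real.exp M * (3 * (1 + M) * r + Real.exp M ^ 2 * (1 / ξ * (3 * (1 + M) * r))) := by
        gcongr
    _ = _ := by rw [bigC, ← hM]; ring

end mix
lemma pi_measure_ge {d : ℕ} (D : Finset (EuclideanSpace ℝ (Fin d))) (hD : D.Nonempty) (n : ℕ)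
    (G : Set (Fin n → EuclideanSpace ℝ (Fin d))) (bad : Finset (Fin n → D)) (c : ℝ)
    (hbad : ∀ ω : Fin n → D, ω ∉ bad → (fun j => (ω j : EuclideanSpace ℝ (Fin d))) ∈ G)
    (hc : (bad.card : ℝ) ≤ (Fintype.card D : ℝ) ^ n * c) :
    ENNReal.ofReal (1 - c) ≤
      (Measure.pi fun _ : Fin n => (PMF.uniformOfFinset D hD).toMeasure) G := by
  classical
  set P := Measure.pi fun _ : Fin n => (PMF.uniformOfFinset D hD).toMeasure with hP
  have hN : (0:ℝ) < D.card := by exact_mod_cast hD.card_pos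
  let emb : (Fin n → D) ↪ (Fin n → EuclideanSpace ℝ (Fin d)) :=
    ⟨fun ω j => (ω j : EuclideanSpace ℝ (Fin d)), fun a b h => by
      funext j; exact Subtype.ext (congrFun h j)⟩
  have hsub : ((badᶜ.map emb : Finset _) : Set (Fin n → EuclideanSpace ℝ (Fin d))) ⊆ G := by
    intro y hy
    simp only [Finset.coe_map, Set.mem_image] at hy
    obtain ⟨ω, hω, rfl⟩ := hy
    exact hbad ω (by simpa using hω)
  refine le_trans ?_ (measure_mono hsub)
  have hsing : ∀ ω : Fin n → D, P {emb ω} = ENNReal.ofReal (((D.card : ℝ) ^ n)⁻¹) := by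
    intro ω
    rw [hP, Measure.pi_singleton]
    have : ∀ j, (PMF.uniformOfFinset D hD).toMeasure {emb ω j} = ENNReal.ofReal ((D.card : ℝ)⁻¹) := by
      intro j
      have e : emb ω j = (ω j : EuclideanSpace ℝ (Fin d)) := rfl
      rw [e, PMF.toMeasure_apply_singleton _ _ (measurableSet_singleton _),
        PMF.uniformOfFinset_apply_of_mem hD (ω j).2, ENNReal.ofReal_inv_of_pos hN]
      simp
    simp only [this, Finset.prod_const, Finset.card_univ, Fintype.card_fin]
    rw [← ENNReal.ofReal_pow (by positivity), inv_pow]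
  rw [← sum_measure_singleton, Finset.sum_map]
  simp only [hsing, Finset.sum_const, nsmul_eq_mul]
  rw [← ENNReal.ofReal_natCast, ← ENNReal.ofReal_mul (by positivity)]
  refine ENNReal.ofReal_le_ofReal ?_
  rw [Finset.card_compl, Nat.cast_sub (Finset.card_le_univ _)]
  simp only [Fintype.card_coe, Fintype.card_pi, Finset.prod_const, Finset.card_univ,
    Fintype.card_fin] at hc ⊢
  push_cast
  rw [← div_eq_mul_inv, le_div_iff₀ (by positivity)]
  linarith

lemma group_bound {d K : ℕ} {ξ ζ ν R : ℝ} (hξ : 0 < ξ) (hζ : 0 < ζ) (hν : 0 < ν) (hR : 0 < R)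
    (hK : 0 < K) (D : Finset (EuclideanSpace ℝ (Fin d))) (hD : D.Nonempty)
    (hx : ∀ x ∈ D, ‖x‖ ≤ R) (n : ℕ) (hn : 1 ≤ n) (δ : ℝ) (hδ : 0 < δ) (hδ1 : δ < 1) :
    ENNReal.ofReal (1 - δ / 2) ≤
      (Measure.pi fun _ : Fin n => (PMF.uniformOfFinset D hD).toMeasure)
        {ω | ∀ (π : Fin K → ℝ) (μ : Fin K → EuclideanSpace ℝ (Fin d))
              (S : Fin K → Matrix (Fin d) (Fin d) ℝ), inPhi ξ ζ ν π μ S → ∀ k,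
            |(∑ x ∈ D, resp π μ S k x) / (D.card : ℝ) - (∑ i, resp π μ S k (ω i)) / (n : ℝ)| ≤
              2 * bigC ξ ζ ν R * Real.sqrt ((d : ℝ) / n) +
                4 * Real.sqrt (2 * Real.log (8 / δ) / n)} := by
  classical
  have : Nonempty D := hD.to_subtype
  have hn0 : (0:ℝ) < n := by exact_mod_cast hn
  have hlog : 0 < Real.log (8 / δ) := Real.log_pos (by rw [lt_div_iff₀ hδ]; linarith)
  have hN : (0:ℝ) < D.card := by exact_mod_cast hD.card_pos
  rcases Nat.eq_zero_or_pos d with rfl | hd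
  · refine pi_measure_ge D hD n _ ∅ (δ / 2) ?_ (by simp; positivity)
    intro ω _
    simp only [Set.mem_ofPred_eq]
    intro π μ S _ k
    have e : ∀ x, resp π μ S k x = resp π μ S k 0 := fun x => by rw [Subsingleton.elim x 0]
    have : (∑ x ∈ D, resp π μ S k x) / (D.card : ℝ) -
        (∑ i, resp π μ S k (ω i)) / (n : ℝ) = 0 := by
      rw [Finset.sum_congr rfl fun x _ => e x, Finset.sum_congr rfl fun i _ => e (ω i)]
      simp
      field_simp
      simp
    rw [this, abs_zero]
    simp only [Nat.cast_zero, zero_div, Real.sqrt_zero, mul_zero, zero_add]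
    positivity
  set t := 4 * Real.sqrt (2 * Real.log (8 / δ) / n) with ht
  have ht0 : 0 ≤ t := by positivity
  set C := bigC ξ ζ ν R with hC
  set B := C * (Real.sqrt d * Real.sqrt n) with hB
  have hBn : 2 * B / n = 2 * C * Real.sqrt ((d : ℝ) / n) := by
    rw [hB, Real.sqrt_div (by positivity)]
    have := Real.mul_self_sqrt hn0.le
    have hs : 0 < Real.sqrt n := Real.sqrt_pos.mpr hn0
    rw [div_eq_iff hn0.ne']
    nth_rewrite 3 [← this]
    field_simp
  have hexp : Real.exp (-(n * t ^ 2 / 2)) ≤ δ / 4 := by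
    have e : n * t ^ 2 / 2 = 16 * Real.log (8 / δ) := by
      rw [ht, mul_pow, Real.sq_sqrt (by positivity)]
      field_simp; ring
    rw [e]
    calc Real.exp (-(16 * Real.log (8 / δ))) ≤ Real.exp (-Real.log (8 / δ)) := by
          gcongr; linarith
      _ = δ / 8 := by rw [Real.exp_neg, Real.exp_log (by positivity), inv_div]
      _ ≤ _ := by linarith
  set f : PhiIdx d K ξ ζ ν → D → ℝ := fun i a => resp i.1.1.1 i.1.1.2.1 i.1.1.2.2 i.2 a with hf
  have hfB : ∀ x : Fin n → D, Rad (fun i j => f i (x j)) B := by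
    intro x
    have := rad_resp (K := K) hd hK hξ hζ hν hR (fun j => (x j : EuclideanSpace ℝ (Fin d)))
      (fun j => hx _ (x j).2)
    rwa [Fintype.card_fin] at this
  have hf01 : ∀ i a, 0 ≤ f i a ∧ f i a ≤ 1 := fun i a => resp_mem hζ hK i.1.2 _ _
  set bad1 : Finset (Fin n → D) := Finset.univ.filter fun ω => ∃ i, 2 * B / n + t <
      (∑ a, f i a) / Fintype.card D - (∑ j, f i (ω j)) / n with hb1
  set bad2 : Finset (Fin n → D) := Finset.univ.filter fun ω => ∃ i, 2 * B / n + t <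
      (∑ a, - f i a) / Fintype.card D - (∑ j, - f i (ω j)) / n with hb2
  have c1 := dev_one n hn f B t ht0 (fun i a b => by linarith [(hf01 i a).2, (hf01 i b).1]) hfB
    bad1 (fun ω hω => by simpa [hb1] using hω)
  have c2 := dev_one n hn (fun i a => - f i a) B t ht0
    (fun i a b => by linarith [(hf01 i a).1, (hf01 i b).2]) (fun x => (hfB x).neg)
    bad2 (fun ω hω => (Finset.mem_filter.mp hω).2)
  refine pi_measure_ge D hD n _ (bad1 ∪ bad2) (δ / 2) ?_ ?_
  · intro ω hω
    simp only [Set.mem_ofPred_eq]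
    intro π μ S hΦ k
    rw [Finset.mem_union, not_or] at hω
    obtain ⟨w1, w2⟩ := hω
    simp only [hb1, hb2, Finset.mem_filter, Finset.mem_univ, true_and, not_exists, not_lt] at w1 w2
    have v1 := w1 (⟨(π, μ, S), hΦ⟩, k)
    have v2 := w2 (⟨(π, μ, S), hΦ⟩, k)
    simp only [hf, Finset.sum_neg_distrib, Fintype.card_coe,
      Finset.sum_coe_sort D (fun a => resp π μ S k a)] at v1 v2
    rw [hBn] at v1 v2
    rw [neg_div, neg_div] at v2
    rw [abs_le]
    constructor <;> linarith
  · have : ((bad1 ∪ bad2).card : ℝ) ≤ bad1.card + bad2.card := by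
      exact_mod_cast Finset.card_union_le _ _
    have hp : (0:ℝ) ≤ (Fintype.card D : ℝ) ^ n := by positivity
    have := mul_le_mul_of_nonneg_left hexp hp
    linarith

lemma abs_iSup_sub_le {K : ℕ} (hK : 0 < K) (a b : Fin K → ℝ) (c : ℝ)
    (h : ∀ k, |a k - b k| ≤ c) : |(⨆ k, |a k|) - (⨆ k, |b k|)| ≤ c := by
  have : Nonempty (Fin K) := ⟨⟨0, hK⟩⟩
  have one : ∀ a b : Fin K → ℝ, (∀ k, |a k - b k| ≤ c) → (⨆ k, |a k|) ≤ (⨆ k, |b k|) + c := by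
    intro a b h
    refine ciSup_le fun k => ?_
    have h1 : |b k| ≤ ⨆ k, |b k| := le_ciSup (Set.finite_range fun k => |b k|).bddAbove k
    have h2 := abs_sub_abs_le_abs_sub (a k) (b k)
    linarith [h k]
  rw [abs_le]
  have h1 := one a b h
  have h2 := one b a (fun k => by rw [abs_sub_comm]; exact h k)
  constructor <;> linarith

/-- **Generalization of the sub-sampled fairness gap.**  For `Δ(Θ)` the population gap
over the finite data sets `D¹, D²` and `Δₙ(Θ)` the gap over `n₁` (resp. `n₂`) i.i.d.
uniform draws with replacement from `D¹` (resp. `D²`), there is a constant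
`C = C(ξ,ζ,ν,x_max) > 0` such that with probability at least `1 - δ`,
`sup_{Θ ∈ Φ} |Δ(Θ) - Δₙ(Θ)| ≤ 4C√(d/n') + 8√(2 log(8/δ)/n')` where `n' = min{n₁,n₂}`. -/
theorem fairness_gap_generalization
    (ξ ζ ν xmax : ℝ) (hξ : 0 < ξ) (hζ : 0 < ζ) (hν : 0 < ν) (hxmax : 0 < xmax) :
    ∃ C : ℝ, 0 < C ∧
      ∀ (d K : ℕ), 0 < K →
      ∀ (D1 D2 : Finset (EuclideanSpace ℝ (Fin d))) (h1 : D1.Nonempty) (h2 : D2.Nonempty),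
        (∀ x ∈ (↑D1 ∪ ↑D2 : Set (EuclideanSpace ℝ (Fin d))), ‖x‖ ≤ xmax) →
      ∀ (n1 n2 : ℕ), 1 ≤ n1 → 1 ≤ n2 →
      ∀ δ : ℝ, 0 < δ → δ < 1 →
        ((Measure.pi fun _ : Fin n1 => (PMF.uniformOfFinset D1 h1).toMeasure).prod
            (Measure.pi fun _ : Fin n2 => (PMF.uniformOfFinset D2 h2).toMeasure))
          {ω : (Fin n1 → EuclideanSpace ℝ (Fin d)) × (Fin n2 → EuclideanSpace ℝ (Fin d)) |
            ∀ (π : Fin K → ℝ) (μ : Fin K → EuclideanSpace ℝ (Fin d))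
              (S : Fin K → Matrix (Fin d) (Fin d) ℝ), inPhi ξ ζ ν π μ S →
              |(⨆ k : Fin K, |(∑ x ∈ D1, resp π μ S k x) / (D1.card : ℝ) -
                    (∑ x ∈ D2, resp π μ S k x) / (D2.card : ℝ)|) -
                (⨆ k : Fin K, |(∑ i, resp π μ S k (ω.1 i)) / (n1 : ℝ) -
                    (∑ j, resp π μ S k (ω.2 j)) / (n2 : ℝ)|)| ≤
                4 * C * Real.sqrt ((d : ℝ) / (min n1 n2 : ℕ)) +
                  8 * Real.sqrt (2 * Real.log (8 / δ) / (min n1 n2 : ℕ))} ≥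
          ENNReal.ofReal (1 - δ) := by
  have hCpos : 0 < bigC ξ ζ ν xmax := by
    unfold bigC
    positivity
  refine ⟨bigC ξ ζ ν xmax, hCpos, ?_⟩
  intro d K hK D1 D2 h1 h2 hx n1 n2 hn1 hn2 δ hδ hδ1
  have g1 := group_bound hξ hζ hν hxmax hK D1 h1 (fun x h => hx x (Or.inl h)) n1 hn1 δ hδ hδ1
  have g2 := group_bound hξ hζ hν hxmax hK D2 h2 (fun x h => hx x (Or.inr h)) n2 hn2 δ hδ hδ1
  have hm : ENNReal.ofReal (1 - δ) ≤
      ENNReal.ofReal (1 - δ / 2) * ENNReal.ofReal (1 - δ / 2) := by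
    rw [← ENNReal.ofReal_mul (by linarith)]
    exact ENNReal.ofReal_le_ofReal (by nlinarith)
  refine ge_iff_le.mpr (hm.trans ((mul_le_mul' g1 g2).trans ?_))
  rw [← Measure.prod_prod]
  refine measure_mono ?_
  rintro ⟨ω1, ω2⟩ ⟨hω1, hω2⟩
  simp only [Set.mem_ofPred_eq] at hω1 hω2 ⊢
  intro π μ S hΦ
  refine abs_iSup_sub_le hK _ _ _ fun k => ?_
  have a1 := hω1 π μ S hΦ k
  have a2 := hω2 π μ S hΦ k
  have hm0 : (0:ℝ) < (min n1 n2 : ℕ) := by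
    exact_mod_cast lt_min (by omega) (by omega)
  have hm1 : ((min n1 n2 : ℕ) : ℝ) ≤ n1 := by exact_mod_cast min_le_left _ _
  have hm2 : ((min n1 n2 : ℕ) : ℝ) ≤ n2 := by exact_mod_cast min_le_right _ _
  have hlog : 0 < Real.log (8 / δ) := Real.log_pos (by rw [lt_div_iff₀ hδ]; linarith)
  have mono : ∀ m : ℝ, ((min n1 n2 : ℕ) : ℝ) ≤ m →
      2 * bigC ξ ζ ν xmax * Real.sqrt ((d : ℝ) / m) +
        4 * Real.sqrt (2 * Real.log (8 / δ) / m) ≤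
      2 * bigC ξ ζ ν xmax * Real.sqrt ((d : ℝ) / (min n1 n2 : ℕ)) +
        4 * Real.sqrt (2 * Real.log (8 / δ) / (min n1 n2 : ℕ)) := by
    intro m hmm
    gcongr
  have b1 := a1.trans (mono _ hm1)
  have b2 := a2.trans (mono _ hm2)
  rw [abs_le] at b1 b2 ⊢
  constructor <;> linarith [b1.1, b1.2, b2.1, b2.2]
end

section
/- Let K ≥ 1 and define the softmax map on ℝ^K by softmax(z)_k = exp(z_k) / Σ_{l=1}^{K} exp(z_l). For any z ∈ ℝ^K, let p = softmax(z) and let J = diag(p) − p pᵀ be the Jacobian matrix of the softmax at z. Then the ℓ₂ operator norm of J is at most 1/2; that is, ‖J v‖₂ ≤ (1/2)‖v‖₂ for every v ∈ ℝ^K. -/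
/-- The softmax map on `ℝ^K`: `softmax(z)_k = exp(z_k) / Σ_l exp(z_l)`. -/
noncomputable def softmax {K : ℕ} (z : Fin K → ℝ) (k : Fin K) : ℝ :=
  Real.exp (z k) / ∑ l, Real.exp (z l)

theorem schur_half {K : ℕ} (A : Fin K → Fin K → ℝ) (v : Fin K → ℝ)
    (hr : ∀ i, ∑ j, |A i j| ≤ 1 / 2) (hc : ∀ j, ∑ i, |A i j| ≤ 1 / 2) :
    ∑ i, (∑ j, A i j * v j) ^ 2 ≤ (1 / 4) * ∑ i, v i ^ 2 := by
  have h1 : ∀ i, (∑ j, A i j * v j) ^ 2 ≤ (1 / 2) * ∑ j, |A i j| * v j ^ 2 := by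
    intro i
    have h := Finset.sum_sq_le_sum_mul_sum_of_sq_le_mul Finset.univ
      (r := fun j => A i j * v j) (f := fun j => |A i j|) (g := fun j => |A i j| * v j ^ 2)
      (fun j _ => abs_nonneg _) (fun j _ => by positivity)
      (fun j _ => le_of_eq (by rw [mul_pow, ← sq_abs (A i j)]; ring))
    refine h.trans (mul_le_mul_of_nonneg_right (hr i) ?_)
    exact Finset.sum_nonneg (fun j _ => by positivity)
  calc ∑ i, (∑ j, A i j * v j) ^ 2 ≤ ∑ i, (1 / 2) * ∑ j, |A i j| * v j ^ 2 :=
        Finset.sum_le_sum (fun i _ => h1 i)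
    _ = (1 / 2) * ∑ j, (∑ i, |A i j|) * v j ^ 2 := by
        rw [← Finset.mul_sum, Finset.sum_comm]
        simp_rw [Finset.sum_mul]
    _ ≤ (1 / 2) * ∑ j, (1 / 2) * v j ^ 2 := by
        refine mul_le_mul_of_nonneg_left (Finset.sum_le_sum fun j _ => ?_) (by norm_num)
        exact mul_le_mul_of_nonneg_right (hc j) (sq_nonneg _)
    _ = (1 / 4) * ∑ i, v i ^ 2 := by
        rw [← Finset.mul_sum]; ring

/-- **Operator-norm bound for the softmax Jacobian.**  For `p = softmax(z)` and
`J = diag(p) - p pᵀ` (the Jacobian of softmax at `z`), the ℓ₂ operator norm of `J` is at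
most `1/2`: `‖J v‖₂ ≤ (1/2) ‖v‖₂` for every `v ∈ ℝ^K`. -/
theorem softmax_jacobian_opNorm_le_half (K : ℕ) (hK : 1 ≤ K) (z v : Fin K → ℝ) :
    Real.sqrt (∑ i,
        (∑ j, ((if i = j then softmax z i else 0) - softmax z i * softmax z j) * v j) ^ 2) ≤
      (1 / 2) * Real.sqrt (∑ i, v i ^ 2) := by
  have hS : 0 < ∑ l, Real.exp (z l) :=
    Finset.sum_pos (fun l _ => Real.exp_pos _) ⟨⟨0, hK⟩, Finset.mem_univ _⟩
  have hp : ∀ i, 0 ≤ softmax z i := fun i => div_nonneg (Real.exp_pos _).le hS.le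
  have hs : ∑ i, softmax z i = 1 := by
    unfold softmax
    rw [← Finset.sum_div, div_self hS.ne']
  have hp1 : ∀ i, softmax z i ≤ 1 := fun i => by
    rw [← hs]
    exact Finset.single_le_sum (fun j _ => hp j) (Finset.mem_univ i)
  generalize softmax z = p at *
  have hr : ∀ i, ∑ j, |(if i = j then p i else 0) - p i * p j| ≤ 1 / 2 := by
    intro i
    have e : ∀ j, |(if i = j then p i else 0) - p i * p j| =
        p i * p j + (if i = j then p i - 2 * p i ^ 2 else 0) := by
      intro j
      split_ifs with h
      · subst h
        rw [abs_of_nonneg (by nlinarith [hp i, hp1 i])]; ring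
      · rw [zero_sub, abs_neg, abs_of_nonneg (mul_nonneg (hp i) (hp j)), add_zero]
    simp_rw [e]
    rw [Finset.sum_add_distrib, ← Finset.mul_sum, hs, Finset.sum_ite_eq]
    simp only [Finset.mem_univ, if_true]
    nlinarith [sq_nonneg (2 * p i - 1)]
  have hc : ∀ j, ∑ i, |(if i = j then p i else 0) - p i * p j| ≤ 1 / 2 := by
    intro j
    refine le_trans (le_of_eq (Finset.sum_congr rfl fun i _ => ?_)) (hr j)
    by_cases h : i = j
    · subst h; rfl
    · rw [if_neg h, if_neg (Ne.symm h), mul_comm]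
  have h := schur_half (fun i j => (if i = j then p i else 0) - p i * p j) v hr hc
  refine (Real.sqrt_le_sqrt h).trans (le_of_eq ?_)
  rw [Real.sqrt_mul (by norm_num), show (1 / 4 : ℝ) = (1 / 2) ^ 2 by norm_num,
    Real.sqrt_sq (by norm_num)]
end

section
/- Let D¹ be a nonempty finite subset of ℝ^d with ‖x‖₂ ≤ x_max for every x ∈ D¹, fix an integer n₁ ≥ 1, and let X₁,…,X_{n₁} be i.i.d. uniform draws (with replacement) from D¹. Fix k ∈ [K]. Then there exists a constant C = C(ξ, ζ, ν, x_max) > 0 such that for every δ ∈ (0,1), with probability at least 1 − δ, sup over Θ ∈ Φ_{ξ,ζ,ν} of |(1/n₁) Σ_{i=1}^{n₁} ψ_k(X_i;Θ) − (1/|D¹|) Σ_{x∈D¹} ψ_k(x;Θ)| ≤ 2C√(d/n₁) + 4√(2 log(4/δ)/n₁). -/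
open MeasureTheory

namespace RUD

open Finset
open scoped BigOperators

/-- Averages over `Fin (n+1) → α` split off the first coordinate. -/
lemma expect_cons {α : Type*} [Fintype α] {n : ℕ} (F : (Fin (n + 1) → α) → ℝ) :
    (𝔼 ω, F ω) = 𝔼 a, 𝔼 ω : Fin n → α, F (Fin.cons a ω) := by
  rw [← Finset.expect_product', Finset.univ_product_univ]
  symm
  exact Fintype.expect_equiv (Fin.consEquiv fun _ => α) _ _ (fun _ => rfl)

lemma le_sup {T : Type*} [Finite T] (f : T → ℝ) (t : T) : f t ≤ ⨆ t, f t :=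
  le_ciSup (Set.finite_range f).bddAbove t

/-- One step of Hoeffding's inequality. -/
lemma hoeffding_step {α : Type*} [Fintype α] [Nonempty α] (h : α → ℝ) (c l : ℝ) (hc : 0 < c)
    (hd : ∀ a b, |h a - h b| ≤ c) :
    (𝔼 a, Real.exp (l * (h a - 𝔼 b, h b))) ≤ Real.exp (l ^ 2 * c ^ 2 / 2) := by
  have hb : ∀ a, |h a - 𝔼 b, h b| ≤ c := by
    intro a
    have : h a - 𝔼 b, h b = 𝔼 b, (h a - h b) := by
      rw [Finset.expect_sub_distrib, Fintype.expect_const]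
    rw [this]
    refine (Finset.abs_expect_le _ _).trans ?_
    exact Finset.expect_le univ_nonempty (fun b _ => hd a b)
  have key : ∀ y : ℝ, |y| ≤ c →
      Real.exp (l * y) ≤ Real.cosh (l * c) + y * (Real.sinh (l * c) / c) := by
    intro y hy
    obtain ⟨h1, h2⟩ := abs_le.mp hy
    have hcv := convexOn_exp.2 (Set.mem_univ (l * c)) (Set.mem_univ (-(l * c)))
      (show 0 ≤ (c + y) / (2 * c) from div_nonneg (by linarith) (by linarith))
      (show 0 ≤ (c - y) / (2 * c) from div_nonneg (by linarith) (by linarith))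
      (by field_simp; ring)
    have e1 : ((c + y) / (2 * c)) • (l * c) + ((c - y) / (2 * c)) • (-(l * c)) = l * y := by
      simp only [smul_eq_mul]; field_simp; ring
    rw [e1] at hcv
    refine hcv.trans (le_of_eq ?_)
    rw [Real.cosh_eq, Real.sinh_eq]
    simp only [smul_eq_mul]; field_simp; ring
  calc (𝔼 a, Real.exp (l * (h a - 𝔼 b, h b)))
      ≤ 𝔼 a, (Real.cosh (l * c) + (h a - 𝔼 b, h b) * (Real.sinh (l * c) / c)) :=
        Finset.expect_le_expect (fun a _ => key _ (hb a))
    _ = Real.cosh (l * c) := by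
        rw [Finset.expect_add_distrib, Fintype.expect_const, ← Finset.expect_mul,
          Finset.expect_sub_distrib, Fintype.expect_const]
        ring
    _ ≤ _ := by
        have := Real.cosh_le_exp_half_sq (l * c)
        rwa [mul_pow] at this

/-- McDiarmid's exponential moment bound on a finite uniform product space. -/
lemma mcdiarmid {α : Type*} [Fintype α] [Nonempty α] (c l : ℝ) (hc : 0 < c) :
    ∀ (n : ℕ) (f : (Fin n → α) → ℝ),
      (∀ ω i a, |f (Function.update ω i a) - f ω| ≤ c) →
      (𝔼 ω, Real.exp (l * (f ω - 𝔼 ω', f ω'))) ≤ Real.exp (n * (l ^ 2 * c ^ 2 / 2)) := by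
  intro n
  induction n with
  | zero =>
    intro f _
    have : ∀ ω, f ω - 𝔼 ω', f ω' = 0 := by
      intro ω
      have : ∀ ω', f ω' = f ω := fun ω' => by rw [Subsingleton.elim ω' ω]
      rw [Finset.expect_congr rfl (fun ω' _ => this ω'), Fintype.expect_const, sub_self]
    simp only [this]
    simp
  | succ n ih =>
    intro f hf
    rw [expect_cons f, expect_cons]
    set h : α → ℝ := fun a => 𝔼 ω : Fin n → α, f (Fin.cons a ω) with hh
    have h1 : ∀ a, (𝔼 ω : Fin n → α, Real.exp (l * (f (Fin.cons a ω) - h a)))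
        ≤ Real.exp (n * (l ^ 2 * c ^ 2 / 2)) := by
      intro a
      apply ih (fun ω => f (Fin.cons a ω))
      intro ω i b
      rw [Fin.cons_update]
      exact hf _ _ _
    have h2 : ∀ a b, |h a - h b| ≤ c := by
      intro a b
      rw [hh]
      simp only
      rw [← Finset.expect_sub_distrib]
      refine (Finset.abs_expect_le _ _).trans ?_
      refine Finset.expect_le univ_nonempty (fun ω _ => ?_)
      have := hf (Fin.cons b ω) 0 a
      rwa [Fin.update_cons_zero] at this
    have h3 := hoeffding_step h c l hc h2
    calc (𝔼 a, 𝔼 ω : Fin n → α, Real.exp (l * (f (Fin.cons a ω) - 𝔼 b, h b)))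
        = 𝔼 a, Real.exp (l * (h a - 𝔼 b, h b)) *
            𝔼 ω : Fin n → α, Real.exp (l * (f (Fin.cons a ω) - h a)) := by
          refine Finset.expect_congr rfl (fun a _ => ?_)
          rw [Finset.mul_expect]
          refine Finset.expect_congr rfl (fun ω _ => ?_)
          rw [← Real.exp_add]; congr 1; ring
      _ ≤ 𝔼 a, Real.exp (l * (h a - 𝔼 b, h b)) * Real.exp (n * (l ^ 2 * c ^ 2 / 2)) :=
          Finset.expect_le_expect (fun a _ =>
            mul_le_mul_of_nonneg_left (h1 a) (Real.exp_pos _).le)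
      _ ≤ Real.exp (l ^ 2 * c ^ 2 / 2) * Real.exp (n * (l ^ 2 * c ^ 2 / 2)) := by
          rw [← Finset.expect_mul]
          exact mul_le_mul_of_nonneg_right h3 (Real.exp_pos _).le
      _ = _ := by
          rw [← Real.exp_add]; congr 1; push_cast; ring

/-- Tail bound by Markov. -/
lemma tail {α : Type*} [Fintype α] [Nonempty α] (n : ℕ) (hn : 1 ≤ n)
    (f : (Fin n → α) → ℝ) (hf : ∀ ω i a, |f (Function.update ω i a) - f ω| ≤ 1)
    (E s : ℝ) (hE : (𝔼 ω, f ω) ≤ E) (hs : 0 ≤ s)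
    (B : Finset (Fin n → α)) (hB : ∀ ω ∈ B, E + s ≤ f ω) :
    (B.card : ℝ) ≤ (Fintype.card α : ℝ) ^ n * Real.exp (-(s ^ 2 / (2 * n))) := by
  have hn0 : (0 : ℝ) < n := by exact_mod_cast hn
  have h := mcdiarmid 1 (s / n) one_pos n f hf
  rw [Fintype.expect_eq_sum_div_card] at h
  have hcard : (Fintype.card (Fin n → α) : ℝ) = (Fintype.card α : ℝ) ^ n := by
    simp
  have hN : (0 : ℝ) < (Fintype.card α : ℝ) ^ n := by
    have : 0 < Fintype.card α := Fintype.card_pos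
    positivity
  rw [hcard, div_le_iff₀ hN] at h
  have h2 : (B.card : ℝ) * Real.exp (s / n * s) ≤
      ∑ ω, Real.exp (s / n * (f ω - 𝔼 ω', f ω')) := by
    calc (B.card : ℝ) * Real.exp (s / n * s) = ∑ ω ∈ B, Real.exp (s / n * s) := by
          rw [Finset.sum_const, nsmul_eq_mul]
      _ ≤ ∑ ω ∈ B, Real.exp (s / n * (f ω - 𝔼 ω', f ω')) := by
          refine Finset.sum_le_sum (fun ω hω => ?_)
          apply Real.exp_le_exp.mpr
          apply mul_le_mul_of_nonneg_left _ (by positivity)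
          have := hB ω hω
          linarith
      _ ≤ _ := Finset.sum_le_sum_of_subset_of_nonneg (Finset.subset_univ _)
          (fun _ _ _ => (Real.exp_pos _).le)
  have h3 : Real.exp (-(s ^ 2 / (2 * n))) =
      Real.exp (n * ((s / n) ^ 2 * 1 ^ 2 / 2)) / Real.exp (s / n * s) := by
    rw [← Real.exp_sub]; congr 1; field_simp; ring
  rw [h3, ← mul_div_assoc, le_div_iff₀ (Real.exp_pos _)]
  linarith

/-- Comparison of one-step suprema lifts to products. -/
lemma sup_induct {α β T : Type*} [Fintype α] [Fintype β] [Finite T] [Nonempty T]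
    (p : T → α → ℝ) (q : T → β → ℝ)
    (h : ∀ A : T → ℝ, (𝔼 x, ⨆ t, (A t + p t x)) ≤ 𝔼 y, ⨆ t, (A t + q t y)) :
    ∀ (n : ℕ) (A : T → ℝ),
      (𝔼 ω : Fin n → α, ⨆ t, (A t + ∑ i, p t (ω i))) ≤
        𝔼 y : Fin n → β, ⨆ t, (A t + ∑ i, q t (y i)) := by
  intro n
  induction n with
  | zero => intro A; simp
  | succ n ih =>
    intro A
    rw [expect_cons, expect_cons]
    simp only [Fin.sum_univ_succ, Fin.cons_zero, Fin.cons_succ]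
    rw [Finset.expect_comm]
    calc _ = 𝔼 ω : Fin n → α, 𝔼 x, ⨆ t, ((A t + ∑ i, p t (ω i)) + p t x) := by
          refine Finset.expect_congr rfl (fun ω _ => Finset.expect_congr rfl (fun x _ => ?_))
          refine iSup_congr (fun t => ?_)
          ring
      _ ≤ 𝔼 ω : Fin n → α, 𝔼 y, ⨆ t, ((A t + ∑ i, p t (ω i)) + q t y) :=
          Finset.expect_le_expect (fun ω _ => h _)
      _ = 𝔼 y, 𝔼 ω : Fin n → α, ⨆ t, ((A t + q t y) + ∑ i, p t (ω i)) := by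
          rw [Finset.expect_comm]
          refine Finset.expect_congr rfl (fun ω _ => Finset.expect_congr rfl (fun x _ => ?_))
          refine iSup_congr (fun t => ?_)
          ring
      _ ≤ 𝔼 y, 𝔼 z : Fin n → β, ⨆ t, ((A t + q t y) + ∑ i, q t (z i)) :=
          Finset.expect_le_expect (fun y _ => ih _)
      _ = _ := by
          refine Finset.expect_congr rfl (fun ω _ => Finset.expect_congr rfl (fun x _ => ?_))
          refine iSup_congr (fun t => ?_)
          ring

/-- Real value of a sign. -/
noncomputable def sg (u : ℤˣ) : ℝ := ((u : ℤ) : ℝ)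

lemma sg_neg (u : ℤˣ) : sg (-u) = - sg u := by simp [sg]

lemma sg_sq (u : ℤˣ) : sg u * sg u = 1 := by
  rcases Int.units_eq_one_or u with h | h <;> simp [sg, h]

lemma sg_abs (u : ℤˣ) : |sg u| = 1 := by
  rcases Int.units_eq_one_or u with h | h <;> simp [sg, h]

lemma expect_neg_u {J : Type*} [Fintype J] [DecidableEq J] (F : (J → ℤˣ) → ℝ) :
    (𝔼 u, F (-u)) = 𝔼 u, F u :=
  Fintype.expect_equiv (Equiv.neg _) _ _ (fun _ => rfl)

lemma expect_sg {J : Type*} [Fintype J] [DecidableEq J] (j : J) :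
    (𝔼 u : J → ℤˣ, sg (u j)) = 0 := by
  have := expect_neg_u (fun u : J → ℤˣ => sg (u j))
  simp only [Pi.neg_apply, sg_neg, Finset.expect_neg_distrib] at this
  linarith

lemma expect_sg_mul {J : Type*} [Fintype J] [DecidableEq J] (j l : J) :
    (𝔼 u : J → ℤˣ, sg (u j) * sg (u l)) = if j = l then 1 else 0 := by
  split_ifs with h
  · subst h
    simp only [sg_sq, Fintype.expect_const]
  · have : (𝔼 u : J → ℤˣ, -(sg (u j) * sg (u l))) = 𝔼 u : J → ℤˣ, sg (u j) * sg (u l) := by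
      refine Fintype.expect_equiv (Equiv.mulLeft (Pi.mulSingle l (-1) : J → ℤˣ)) _ _ ?_
      intro u
      simp [Pi.mulSingle_eq_of_ne h, sg_neg]
    rw [Finset.expect_neg_distrib] at this
    linarith

lemma sum_abs_le {J : Type*} [Fintype J] [DecidableEq J] (v : J → ℝ) :
    ∑ j, |v j| ≤ 𝔼 u : J → ℤˣ, |(Fintype.card J : ℝ) * ∑ j, sg (u j) * v j| := by
  have h1 : ∀ j, |v j| ≤ 𝔼 u : J → ℤˣ, |∑ l, sg (u l) * v l| := by
    intro j
    have : v j = 𝔼 u : J → ℤˣ, sg (u j) * ∑ l, sg (u l) * v l := by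
      simp only [Finset.mul_sum]
      rw [Finset.expect_sum_comm]
      simp only [← mul_assoc, ← Finset.expect_mul, expect_sg_mul]
      simp
    conv_lhs => rw [this]
    refine (Finset.abs_expect_le _ _).trans (le_of_eq ?_)
    refine Finset.expect_congr rfl (fun u _ => ?_)
    rw [abs_mul, sg_abs, one_mul]
  calc ∑ j, |v j| ≤ ∑ _j : J, 𝔼 u : J → ℤˣ, |∑ l, sg (u l) * v l| :=
        Finset.sum_le_sum (fun j _ => h1 j)
    _ = (Fintype.card J : ℝ) * 𝔼 u : J → ℤˣ, |∑ l, sg (u l) * v l| := by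
        rw [Finset.sum_const, nsmul_eq_mul, Finset.card_univ]
    _ = _ := by
        rw [Finset.mul_expect]
        refine Finset.expect_congr rfl (fun u _ => ?_)
        rw [abs_mul, Nat.abs_cast]

/-- One-step vector contraction. -/
lemma contraction_step {J T : Type*} [Fintype J] [DecidableEq J] [Finite T] [Nonempty T]
    (A f : T → ℝ) (g : J → T → ℝ)
    (h : ∀ t t', |f t - f t'| ≤ ∑ j, |g j t - g j t'|) :
    (⨆ t, (A t + f t)) + (⨆ t, (A t - f t)) ≤
      2 * 𝔼 u : J → ℤˣ, ⨆ t, (A t + (Fintype.card J : ℝ) * ∑ j, sg (u j) * g j t) := by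
  set G : (J → ℤˣ) → T → ℝ := fun u t => (Fintype.card J : ℝ) * ∑ j, sg (u j) * g j t with hG
  have hGneg : ∀ u t, G (-u) t = - G u t := by
    intro u t
    simp [hG, sg_neg]
  have key : ∀ t t', (A t + f t) + (A t' - f t') ≤ 2 * 𝔼 u, ⨆ t, (A t + G u t) := by
    intro t t'
    have e1 : f t - f t' ≤ 𝔼 u, |G u t - G u t'| := by
      refine (le_abs_self _).trans ((h t t').trans ((sum_abs_le _).trans (le_of_eq ?_)))
      refine Finset.expect_congr rfl (fun u _ => ?_)
      rw [hG]
      simp only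
      rw [← mul_sub, ← Finset.sum_sub_distrib]
      simp only [mul_sub]
    have e2 : (𝔼 u, ((A t + A t') + |G u t - G u t'|)) ≤
        𝔼 u, ((⨆ t, (A t + G u t)) + ⨆ t, (A t + G (-u) t)) := by
      refine Finset.expect_le_expect (fun u _ => ?_)
      have a1 := le_sup (fun t => A t + G u t) t
      have a2 := le_sup (fun t => A t + G u t) t'
      have a3 := le_sup (fun t => A t + G (-u) t) t
      have a4 := le_sup (fun t => A t + G (-u) t) t'
      simp only [hGneg] at a1 a2 a3 a4 ⊢
      rcases abs_cases (G u t - G u t') with ⟨hh, _⟩ | ⟨hh, _⟩ <;> rw [hh] <;> linarith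
    rw [Finset.expect_add_distrib, Fintype.expect_const, Finset.expect_add_distrib,
      expect_neg_u (fun u => ⨆ t, (A t + G u t))] at e2
    linarith
  have : (⨆ t, (A t + f t)) ≤ (2 * 𝔼 u, ⨆ t, (A t + G u t)) - ⨆ t, (A t - f t) := by
    refine ciSup_le (fun t => ?_)
    have : (⨆ t, (A t - f t)) ≤ (2 * 𝔼 u, ⨆ t, (A t + G u t)) - (A t + f t) :=
      ciSup_le (fun t' => by linarith [key t t'])
    linarith
  linarith

/-- One-step symmetrization plus contraction. -/
lemma symm_step {α J T : Type*} [Fintype α] [Nonempty α] [Fintype J] [DecidableEq J] [Finite T]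
    [Nonempty T] (f : T → α → ℝ) (g : J → T → α → ℝ)
    (h : ∀ t t' x, |f t x - f t' x| ≤ ∑ j, |g j t x - g j t' x|) (A : T → ℝ) :
    (𝔼 x, ⨆ t, (A t + (f t x - 𝔼 x', f t x'))) ≤
      𝔼 y : α × (J → ℤˣ),
        ⨆ t, (A t + (Fintype.card J : ℝ) * ∑ j, sg (y.2 j) * (2 * g j t y.1)) := by
  have e1 : ∀ x, (⨆ t, (A t + (f t x - 𝔼 x', f t x'))) ≤
      (⨆ t, (A t + 2 * f t x)) / 2 + 𝔼 x', (⨆ t, (A t - 2 * f t x')) / 2 := by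
    intro x
    refine ciSup_le (fun t => ?_)
    have a1 := le_sup (fun t => A t + 2 * f t x) t
    have a2 : (𝔼 x', (A t / 2 - f t x')) ≤ 𝔼 x', (⨆ t, (A t - 2 * f t x')) / 2 := by
      refine Finset.expect_le_expect (fun x' _ => ?_)
      have := le_sup (fun t => A t - 2 * f t x') t
      linarith
    rw [Finset.expect_sub_distrib, Fintype.expect_const] at a2
    linarith
  calc _ ≤ 𝔼 x, ((⨆ t, (A t + 2 * f t x)) / 2 + 𝔼 x', (⨆ t, (A t - 2 * f t x')) / 2) :=
        Finset.expect_le_expect (fun x _ => e1 x)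
    _ = 𝔼 x, ((⨆ t, (A t + 2 * f t x)) + (⨆ t, (A t - 2 * f t x))) / 2 := by
        rw [Finset.expect_add_distrib, Fintype.expect_const, ← Finset.expect_add_distrib]
        refine Finset.expect_congr rfl (fun u _ => ?_)
        ring
    _ ≤ 𝔼 x, 𝔼 u : J → ℤˣ,
          ⨆ t, (A t + (Fintype.card J : ℝ) * ∑ j, sg (u j) * (2 * g j t x)) := by
        refine Finset.expect_le_expect (fun x _ => ?_)
        have := contraction_step A (fun t => 2 * f t x) (fun j t => 2 * g j t x) (by
          intro t t'
          simp only [← mul_sub, abs_mul, ← Finset.mul_sum]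
          exact mul_le_mul_of_nonneg_left (h t t' x) (abs_nonneg _))
        linarith
    _ = _ := by
        rw [← Finset.univ_product_univ, Finset.expect_product]

/-- Second moment of a sum of centered vectors. -/
lemma second_moment {β H : Type*} [Fintype β] [Nonempty β] [NormedAddCommGroup H]
    [InnerProductSpace ℝ H] (Z : β → H) (r : ℝ) (h0 : ∀ v : H, (𝔼 y, inner ℝ v (Z y)) = 0)
    (hr : ∀ y, ‖Z y‖ ≤ r) :
    ∀ (n : ℕ) (v : H), (𝔼 y : Fin n → β, ‖v + ∑ i, Z (y i)‖ ^ 2) ≤ ‖v‖ ^ 2 + n * r ^ 2 := by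
  intro n
  induction n with
  | zero => intro v; simp
  | succ n ih =>
    intro v
    rw [expect_cons]
    simp only [Fin.sum_univ_succ, Fin.cons_zero, Fin.cons_succ, ← add_assoc]
    calc _ ≤ 𝔼 a, (‖v + Z a‖ ^ 2 + n * r ^ 2) := Finset.expect_le_expect (fun a _ => ih _)
      _ ≤ 𝔼 a, ((‖v‖ ^ 2 + r ^ 2 + n * r ^ 2) + 2 * inner ℝ v (Z a)) := by
          refine Finset.expect_le_expect (fun a _ => ?_)
          rw [norm_add_sq_real]
          have : ‖Z a‖ ^ 2 ≤ r ^ 2 := pow_le_pow_left₀ (norm_nonneg _) (hr a) 2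
          linarith
      _ = _ := by
          rw [Finset.expect_add_distrib, Fintype.expect_const, ← Finset.mul_expect, h0]
          push_cast; ring

lemma expect_norm_le {β H : Type*} [Fintype β] [Nonempty β] [NormedAddCommGroup H]
    [InnerProductSpace ℝ H] (Z : β → H) (r : ℝ) (hr0 : 0 ≤ r)
    (h0 : ∀ v : H, (𝔼 y, inner ℝ v (Z y)) = 0)
    (hr : ∀ y, ‖Z y‖ ≤ r) (n : ℕ) :
    (𝔼 y : Fin n → β, ‖∑ i, Z (y i)‖) ≤ r * Real.sqrt n := by
  have h := second_moment Z r h0 hr n 0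
  simp only [zero_add, norm_zero] at h
  have cs := Finset.expect_mul_sq_le_sq_mul_sq (univ : Finset (Fin n → β))
    (fun y => ‖∑ i, Z (y i)‖) (fun _ => (1 : ℝ))
  simp only [mul_one, one_pow, Fintype.expect_const] at cs
  refine le_of_sq_le_sq ?_ (by positivity)
  rw [mul_pow, Real.sq_sqrt (Nat.cast_nonneg n)]
  nlinarith

/-- Expected supremum bound. -/
lemma expect_sup_le {α J T H : Type*} [Fintype α] [Nonempty α] [Fintype J] [DecidableEq J]
    [Finite T] [Nonempty T] [NormedAddCommGroup H] [InnerProductSpace ℝ H]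
    (f : T → α → ℝ) (a : J → T → H) (φ : α → H) (ρ r : ℝ) (hρ0 : 0 ≤ ρ) (hr0 : 0 ≤ r)
    (ha : ∀ j t, ‖a j t‖ ≤ ρ) (hφ : ∀ x, ‖φ x‖ ≤ r)
    (h : ∀ t t' x, |f t x - f t' x| ≤ ∑ j, |inner ℝ (a j t) (φ x) - inner ℝ (a j t') (φ x)|)
    (n : ℕ) :
    (𝔼 ω : Fin n → α, ⨆ t, ∑ i, (f t (ω i) - 𝔼 x, f t x)) ≤
      2 * (Fintype.card J : ℝ) ^ 2 * ρ * r * Real.sqrt n := by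
  have h1 := sup_induct (fun t x => f t x - 𝔼 x', f t x')
    (fun t (y : α × (J → ℤˣ)) =>
      (Fintype.card J : ℝ) * ∑ j, sg (y.2 j) * (2 * inner ℝ (a j t) (φ y.1)))
    (symm_step f (fun j t x => inner ℝ (a j t) (φ x)) h) n (fun _ => 0)
  simp only [zero_add] at h1
  refine h1.trans ?_
  have h2 : ∀ j, (𝔼 y : Fin n → α × (J → ℤˣ), ‖∑ i, sg ((y i).2 j) • φ (y i).1‖)
      ≤ r * Real.sqrt n := by
    intro j
    refine expect_norm_le (fun y : α × (J → ℤˣ) => sg (y.2 j) • φ y.1) r hr0 ?_ ?_ n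
    · intro v
      rw [← Finset.univ_product_univ, Finset.expect_product]
      refine Finset.expect_eq_zero (fun x _ => ?_)
      simp only [inner_smul_right]
      rw [← Finset.expect_mul, expect_sg, zero_mul]
    · intro y
      rw [norm_smul, Real.norm_eq_abs, sg_abs, one_mul]
      exact hφ _
  calc _ ≤ 𝔼 y : Fin n → α × (J → ℤˣ), (2 * (Fintype.card J : ℝ) * ρ) *
        ∑ j, ‖∑ i, sg ((y i).2 j) • φ (y i).1‖ := by
        refine Finset.expect_le_expect (fun y _ => ciSup_le (fun t => ?_))
        have e : ∑ i, (Fintype.card J : ℝ) * ∑ j, sg ((y i).2 j) * (2 * inner ℝ (a j t) (φ (y i).1))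
            = (2 * (Fintype.card J : ℝ)) *
              ∑ j, inner ℝ (a j t) (∑ i, sg ((y i).2 j) • φ (y i).1) := by
          simp only [inner_sum, inner_smul_right]
          rw [Finset.sum_comm (s := (univ : Finset J)), Finset.mul_sum]
          refine Finset.sum_congr rfl (fun i _ => ?_)
          rw [Finset.mul_sum, Finset.mul_sum]
          refine Finset.sum_congr rfl (fun j _ => ?_)
          ring
        rw [e, mul_assoc _ ρ, Finset.mul_sum (a := ρ)]
        refine mul_le_mul_of_nonneg_left (Finset.sum_le_sum (fun j _ => ?_)) (by positivity)
        exact (real_inner_le_norm _ _).trans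
          (mul_le_mul_of_nonneg_right (ha j t) (norm_nonneg _))
    _ = (2 * (Fintype.card J : ℝ) * ρ) *
        ∑ j, 𝔼 y : Fin n → α × (J → ℤˣ), ‖∑ i, sg ((y i).2 j) • φ (y i).1‖ := by
        rw [← Finset.mul_expect, Finset.expect_sum_comm]
    _ ≤ (2 * (Fintype.card J : ℝ) * ρ) * ∑ _j : J, r * Real.sqrt n :=
        mul_le_mul_of_nonneg_left (Finset.sum_le_sum (fun j _ => h2 j)) (by positivity)
    _ = _ := by
        rw [Finset.sum_const, nsmul_eq_mul, Finset.card_univ]; ring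

/-- One-sided uniform deviation. -/
lemma one_sided {α J T H : Type*} [Fintype α] [Nonempty α] [Fintype J] [DecidableEq J]
    [NormedAddCommGroup H] [InnerProductSpace ℝ H]
    (f : T → α → ℝ) (hf1 : ∀ t x y, |f t x - f t y| ≤ 1)
    (a : J → T → H) (φ : α → H) (ρ r : ℝ) (hρ0 : 0 ≤ ρ) (hr0 : 0 ≤ r)
    (ha : ∀ j t, ‖a j t‖ ≤ ρ) (hφ : ∀ x, ‖φ x‖ ≤ r)
    (h : ∀ t t' x, |f t x - f t' x| ≤ ∑ j, |inner ℝ (a j t) (φ x) - inner ℝ (a j t') (φ x)|)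
    (n : ℕ) (hn : 1 ≤ n) (s : ℝ) (hs : 0 ≤ s) (B : Finset (Fin n → α))
    (hB : ∀ ω ∈ B, ∃ t, 2 * (Fintype.card J : ℝ) ^ 2 * ρ * r * Real.sqrt n + s <
      ∑ i, (f t (ω i) - 𝔼 x, f t x)) :
    (B.card : ℝ) ≤ (Fintype.card α : ℝ) ^ n * Real.exp (-(s ^ 2 / (2 * n))) := by
  classical
  rcases B.eq_empty_or_nonempty with rfl | hne
  · simp only [Finset.card_empty, Nat.cast_zero]; positivity
  choose θ hθ using hB
  have : Nonempty B := hne.to_subtype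
  set f' : B → α → ℝ := fun b => f (θ b b.2) with hf'
  have hE := expect_sup_le f' (fun j (b : B) => a j (θ b b.2)) φ ρ r hρ0 hr0
    (fun j t => ha _ _) hφ (fun t t' x => h _ _ x) n
  refine tail n hn (fun ω => ⨆ t : B, ∑ i, (f' t (ω i) - 𝔼 x, f' t x)) ?_ _ s hE hs B ?_
  · have main : ∀ (ω ω' : Fin n → α) (i : Fin n), (∀ j, j ≠ i → ω j = ω' j) →
        (⨆ t : B, ∑ i, (f' t (ω i) - 𝔼 x, f' t x)) ≤
          (⨆ t : B, ∑ i, (f' t (ω' i) - 𝔼 x, f' t x)) + 1 := by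
      intro ω ω' i hh
      refine ciSup_le (fun t => ?_)
      have h1 := le_sup (fun t : B => ∑ i, (f' t (ω' i) - 𝔼 x, f' t x)) t
      have h2 : ∑ j, (f' t (ω j) - 𝔼 x, f' t x) - ∑ j, (f' t (ω' j) - 𝔼 x, f' t x)
          = f' t (ω i) - f' t (ω' i) := by
        rw [← Finset.sum_sub_distrib, Finset.sum_eq_single i]
        · ring
        · intro j _ hj
          rw [hh j hj]; ring
        · simp
      have h3 := (le_abs_self _).trans (hf1 (θ t t.2) (ω i) (ω' i))
      simp only [hf'] at h2 h1 ⊢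
      linarith
    intro ω i x
    rw [abs_le]
    constructor
    · have := main ω (Function.update ω i x) i (fun j hj => by simp [hj])
      linarith
    · have := main (Function.update ω i x) ω i (fun j hj => by simp [hj])
      linarith
  · intro ω hω
    refine (hθ ω hω).le.trans ?_
    exact le_sup (fun t : B => ∑ i, (f' t (ω i) - 𝔼 x, f' t x)) ⟨ω, hω⟩

end RUD

namespace RUD

open Finset
open scoped BigOperators Matrix

lemma exp_lip (a b : ℝ) (ha : a ≤ 0) (hb : b ≤ 0) : |Real.exp a - Real.exp b| ≤ |a - b| := by
  have main : ∀ a b : ℝ, a ≤ 0 → Real.exp a - Real.exp b ≤ |a - b| := by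
    intro a b ha
    have h1 : Real.exp b = Real.exp a * Real.exp (b - a) := by
      rw [← Real.exp_add]; congr 1; ring
    have h2 := Real.add_one_le_exp (b - a)
    have h3 : Real.exp a ≤ 1 := Real.exp_le_one_iff.mpr ha
    have h4 := Real.exp_pos a
    have h5 := le_abs_self (a - b)
    have h6 := abs_nonneg (a - b)
    rw [h1]
    nlinarith
  rw [abs_le]
  constructor
  · have := main b a hb
    rw [abs_sub_comm] at this
    linarith
  · exact main a b ha

lemma softmax_denom {K : ℕ} (w h : Fin K → ℝ) (B : ℝ) (hw : ∀ l, 0 ≤ w l) (hw1 : ∑ l, w l = 1)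
    (hl : ∀ l, -B ≤ h l) : Real.exp (-B) ≤ ∑ l, w l * Real.exp (h l) := by
  calc Real.exp (-B) = ∑ l, w l * Real.exp (-B) := by rw [← Finset.sum_mul, hw1, one_mul]
    _ ≤ _ := Finset.sum_le_sum (fun l _ =>
      mul_le_mul_of_nonneg_left (Real.exp_le_exp.mpr (hl l)) (hw l))

lemma softmax_lip {K : ℕ} (k : Fin K) (w w' h h' : Fin K → ℝ) (B : ℝ)
    (hw : ∀ l, 0 ≤ w l) (hw1 : ∑ l, w l = 1) (hl : ∀ l, -B ≤ h l) (hu : ∀ l, h l ≤ 0)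
    (hw' : ∀ l, 0 ≤ w' l) (hw1' : ∑ l, w' l = 1) (hl' : ∀ l, -B ≤ h' l) (hu' : ∀ l, h' l ≤ 0) :
    |w k * Real.exp (h k) / ∑ l, w l * Real.exp (h l) -
      w' k * Real.exp (h' k) / ∑ l, w' l * Real.exp (h' l)| ≤
      2 * Real.exp B * ∑ l, (|w l - w' l| + |h l - h' l|) := by
  have hD := softmax_denom w h B hw hw1 hl
  have hD' := softmax_denom w' h' B hw' hw1' hl'
  have hp : ∀ l, |w l * Real.exp (h l) - w' l * Real.exp (h' l)| ≤
      |w l - w' l| + |h l - h' l| := by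
    intro l
    have e : w l * Real.exp (h l) - w' l * Real.exp (h' l) =
        (w l - w' l) * Real.exp (h l) + w' l * (Real.exp (h l) - Real.exp (h' l)) := by ring
    have hw'1 : w' l ≤ 1 := by
      rw [← hw1']; exact Finset.single_le_sum (fun i _ => hw' i) (Finset.mem_univ l)
    have he : Real.exp (h l) ≤ 1 := Real.exp_le_one_iff.mpr (hu l)
    rw [e]
    refine (abs_add_le _ _).trans (add_le_add ?_ ?_)
    · rw [abs_mul, abs_of_pos (Real.exp_pos _)]
      exact mul_le_of_le_one_right (abs_nonneg _) he
    · rw [abs_mul, abs_of_nonneg (hw' l)]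
      exact (mul_le_of_le_one_left (abs_nonneg _) hw'1).trans (exp_lip _ _ (hu l) (hu' l))
  set S : ℝ := ∑ l, (|w l - w' l| + |h l - h' l|) with hS
  set D := ∑ l, w l * Real.exp (h l) with hDd
  set D' := ∑ l, w' l * Real.exp (h' l) with hDd'
  set p := w k * Real.exp (h k) with hpd
  set p' := w' k * Real.exp (h' k) with hpd'
  have hDD : |D' - D| ≤ S := by
    rw [hDd, hDd', ← Finset.sum_sub_distrib]
    refine (Finset.abs_sum_le_sum_abs _ _).trans (Finset.sum_le_sum (fun l _ => ?_))
    rw [abs_sub_comm]; exact hp l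
  have hpp : |p - p'| ≤ S :=
    (hp k).trans (Finset.single_le_sum (f := fun l => |w l - w' l| + |h l - h' l|)
      (fun i _ => add_nonneg (abs_nonneg _) (abs_nonneg _)) (Finset.mem_univ k))
  have hBpos := Real.exp_pos (-B)
  have D0 : 0 < D := hBpos.trans_le hD
  have D0' : 0 < D' := hBpos.trans_le hD'
  have hp0' : 0 ≤ p' := mul_nonneg (hw' k) (Real.exp_pos _).le
  have hpD' : p' / D' ≤ 1 := by
    rw [div_le_one D0']
    exact Finset.single_le_sum (f := fun l => w' l * Real.exp (h' l))
      (fun i _ => mul_nonneg (hw' i) (Real.exp_pos _).le) (Finset.mem_univ k)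
  have e : p / D - p' / D' = ((p - p') + p' / D' * (D' - D)) / D := by
    field_simp; ring
  have hS0 : 0 ≤ S := (abs_nonneg _).trans hpp
  have hnum : |(p - p') + p' / D' * (D' - D)| ≤ 2 * S := by
    refine (abs_add_le _ _).trans ?_
    rw [abs_mul, abs_of_nonneg (div_nonneg hp0' D0'.le)]
    have := mul_le_of_le_one_left (abs_nonneg (D' - D)) hpD'
    linarith
  rw [e, abs_div, abs_of_pos D0, div_le_iff₀ D0]
  have hone : 1 ≤ Real.exp B * D := by
    have : Real.exp B * Real.exp (-B) = 1 := by rw [← Real.exp_add]; simp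
    rw [← this]
    exact mul_le_mul_of_nonneg_left hD (Real.exp_pos _).le
  nlinarith

/-- Bilinear form of a matrix. -/
def qf {d : ℕ} (M : Matrix (Fin d) (Fin d) ℝ) (v : EuclideanSpace ℝ (Fin d)) : ℝ :=
  ∑ i, ∑ j, v i * M i j * v j

/-- Matrix-vector product in Euclidean space. -/
noncomputable def mv {d : ℕ} (M : Matrix (Fin d) (Fin d) ℝ) (v : EuclideanSpace ℝ (Fin d)) :
    EuclideanSpace ℝ (Fin d) := WithLp.toLp 2 (M *ᵥ v.ofLp)

lemma mv_apply {d : ℕ} (M : Matrix (Fin d) (Fin d) ℝ) (v : EuclideanSpace ℝ (Fin d)) (i : Fin d) :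
    mv M v i = ∑ j, M i j * v j := rfl

lemma inner_eq {d : ℕ} (v w : EuclideanSpace ℝ (Fin d)) : inner ℝ v w = ∑ i, v i * w i := by
  simp [PiLp.inner_apply, mul_comm]

lemma qf_eq {d : ℕ} (M : Matrix (Fin d) (Fin d) ℝ) (v : EuclideanSpace ℝ (Fin d)) :
    qf M v = inner ℝ v (mv M v) := by
  rw [inner_eq, qf]
  simp only [mv_apply, Finset.mul_sum, mul_assoc]

section cov
variable {d : ℕ} (S : Matrix (Fin d) (Fin d) ℝ) (ζ : ℝ)

lemma cov_det (hζ : 0 < ζ) (hs : S.IsSymm)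
    (hS : ∀ v : EuclideanSpace ℝ (Fin d), v ≠ 0 → ζ * ‖v‖ ^ 2 < qf S v) : 0 < S.det := by
  have : S.PosDef := by
    refine Matrix.PosDef.of_dotProduct_mulVec_pos ?_ ?_
    · rw [Matrix.IsHermitian, Matrix.conjTranspose_eq_transpose_of_trivial]; exact hs
    · intro x hx
      have hx' : (WithLp.toLp 2 x : EuclideanSpace ℝ (Fin d)) ≠ 0 := by
        intro h0; apply hx
        exact (WithLp.toLp_eq_zero 2).mp h0
      have h1 := hS _ hx'
      have h2 : qf S (WithLp.toLp 2 x) = star x ⬝ᵥ S *ᵥ x := by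
        rw [qf_eq, inner_eq]; rfl
      rw [← h2]
      have : 0 ≤ ζ * ‖(WithLp.toLp 2 x : EuclideanSpace ℝ (Fin d))‖ ^ 2 := by positivity
      linarith
  exact this.det_pos

lemma mv_inv (h : 0 < S.det) (v : EuclideanSpace ℝ (Fin d)) : mv S (mv S⁻¹ v) = v := by
  have hu : IsUnit S.det := isUnit_iff_ne_zero.mpr h.ne'
  simp [mv, Matrix.mulVec_mulVec, Matrix.mul_nonsing_inv S hu]

lemma qf_inv (h : 0 < S.det) (v : EuclideanSpace ℝ (Fin d)) :
    qf S⁻¹ v = qf S (mv S⁻¹ v) := by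
  rw [qf_eq, qf_eq, mv_inv S h, real_inner_comm]

lemma qf_ge (hS : ∀ v : EuclideanSpace ℝ (Fin d), v ≠ 0 → ζ * ‖v‖ ^ 2 < qf S v)
    (v : EuclideanSpace ℝ (Fin d)) : ζ * ‖v‖ ^ 2 ≤ qf S v := by
  by_cases hv : v = 0
  · subst hv; simp [qf]
  · exact (hS v hv).le

lemma inv_norm (hζ : 0 < ζ) (h : 0 < S.det)
    (hS : ∀ v : EuclideanSpace ℝ (Fin d), v ≠ 0 → ζ * ‖v‖ ^ 2 < qf S v)
    (v : EuclideanSpace ℝ (Fin d)) : ‖mv S⁻¹ v‖ ≤ ‖v‖ / ζ := by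
  have h1 := qf_ge S ζ hS (mv S⁻¹ v)
  rw [← qf_inv S h, qf_eq] at h1
  have h2 := real_inner_le_norm v (mv S⁻¹ v)
  rw [le_div_iff₀ hζ]
  by_contra hc
  push Not at hc
  have h3 : 0 < ‖mv S⁻¹ v‖ := by
    by_contra h0
    have : ‖mv S⁻¹ v‖ = 0 := le_antisymm (not_lt.mp h0) (norm_nonneg _)
    rw [this] at hc
    have := norm_nonneg v
    linarith
  nlinarith

lemma qf_inv_nonneg (hζ : 0 < ζ) (h : 0 < S.det)
    (hS : ∀ v : EuclideanSpace ℝ (Fin d), v ≠ 0 → ζ * ‖v‖ ^ 2 < qf S v)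
    (v : EuclideanSpace ℝ (Fin d)) : 0 ≤ qf S⁻¹ v := by
  rw [qf_inv S h]
  exact le_trans (by positivity) (qf_ge S ζ hS _)

lemma qf_inv_le (hζ : 0 < ζ) (h : 0 < S.det)
    (hS : ∀ v : EuclideanSpace ℝ (Fin d), v ≠ 0 → ζ * ‖v‖ ^ 2 < qf S v)
    (v : EuclideanSpace ℝ (Fin d)) : qf S⁻¹ v ≤ ‖v‖ ^ 2 / ζ := by
  rw [qf_eq]
  refine (real_inner_le_norm _ _).trans ?_
  have := mul_le_mul_of_nonneg_left (inv_norm S ζ hζ h hS v) (norm_nonneg v)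
  refine this.trans (le_of_eq ?_)
  ring

lemma frob_inv (hζ : 0 < ζ) (h : 0 < S.det)
    (hS : ∀ v : EuclideanSpace ℝ (Fin d), v ≠ 0 → ζ * ‖v‖ ^ 2 < qf S v) :
    ∑ i, ∑ j, (S⁻¹ i j) ^ 2 ≤ d / ζ ^ 2 := by
  rw [Finset.sum_comm]
  have : ∀ j : Fin d, ∑ i, (S⁻¹ i j) ^ 2 ≤ 1 / ζ ^ 2 := by
    intro j
    have h1 := inv_norm S ζ hζ h hS (EuclideanSpace.single j 1)
    have h2 : ‖mv S⁻¹ (EuclideanSpace.single j 1)‖ ^ 2 = ∑ i, (S⁻¹ i j) ^ 2 := by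
      rw [EuclideanSpace.real_norm_sq_eq]
      refine Finset.sum_congr rfl (fun i _ => ?_)
      rw [mv_apply]
      simp
    rw [← h2]
    have h3 : ‖(EuclideanSpace.single j (1 : ℝ) : EuclideanSpace ℝ (Fin d))‖ = 1 := by simp
    rw [h3] at h1
    calc _ ≤ (1 / ζ) ^ 2 := pow_le_pow_left₀ (norm_nonneg _) h1 2
      _ = _ := by rw [div_pow, one_pow]
  calc _ ≤ ∑ _j : Fin d, 1 / ζ ^ 2 := Finset.sum_le_sum (fun j _ => this j)
    _ = _ := by rw [Finset.sum_const, nsmul_eq_mul]; simp [div_eq_mul_inv]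

end cov

/-- Feature space. -/
abbrev FS (d : ℕ) := EuclideanSpace ℝ ((Fin d × Fin d) ⊕ (Fin d ⊕ Unit))

/-- Quadratic feature map. -/
noncomputable def feat {d : ℕ} (x : EuclideanSpace ℝ (Fin d)) : FS d :=
  WithLp.toLp 2 (Sum.elim (fun p => x p.1 * x p.2) (Sum.elim (fun i => x i) (fun _ => 1)))

/-- Coefficients. -/
noncomputable def coef {d : ℕ} (A : Fin d → Fin d → ℝ) (b : Fin d → ℝ) (c : ℝ) : FS d :=
  WithLp.toLp 2 (Sum.elim (fun p => A p.1 p.2) (Sum.elim b (fun _ => c)))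

lemma inner_coef {d : ℕ} (A : Fin d → Fin d → ℝ) (b : Fin d → ℝ) (c : ℝ)
    (x : EuclideanSpace ℝ (Fin d)) :
    inner ℝ (coef A b c) (feat x) = ∑ i, ∑ j, A i j * (x i * x j) + (∑ i, b i * x i + c) := by
  simp [PiLp.inner_apply, coef, feat, Fintype.sum_sum_type, Fintype.sum_prod_type, mul_comm]

lemma norm_coef {d : ℕ} (A : Fin d → Fin d → ℝ) (b : Fin d → ℝ) (c : ℝ) :
    ‖coef A b c‖ ^ 2 = ∑ i, ∑ j, A i j ^ 2 + (∑ i, b i ^ 2 + c ^ 2) := by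
  rw [EuclideanSpace.real_norm_sq_eq]
  simp [coef, Fintype.sum_sum_type, Fintype.sum_prod_type]

lemma norm_feat {d : ℕ} (x : EuclideanSpace ℝ (Fin d)) :
    ‖feat x‖ ≤ ‖x‖ ^ 2 + 1 := by
  have h : ‖feat x‖ ^ 2 = ‖x‖ ^ 2 * ‖x‖ ^ 2 + (‖x‖ ^ 2 + 1) := by
    have : feat x = coef (fun i j => x i * x j) (fun i => x i) 1 := rfl
    rw [this, norm_coef, EuclideanSpace.real_norm_sq_eq, Finset.sum_mul_sum]
    simp [mul_pow]
  refine le_of_sq_le_sq ?_ (by positivity)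
  rw [h]
  nlinarith [sq_nonneg ‖x‖]

/-- Coefficient vector of `-(x-μ)ᵀ A (x-μ)/2`. -/
noncomputable def qcoef {d : ℕ} (A : Matrix (Fin d) (Fin d) ℝ) (μ : EuclideanSpace ℝ (Fin d)) :
    FS d :=
  coef (fun i j => -A i j / 2) (fun i => mv A μ i) (-qf A μ / 2)

lemma inner_qcoef {d : ℕ} (A : Matrix (Fin d) (Fin d) ℝ) (hA : A.IsSymm)
    (μ x : EuclideanSpace ℝ (Fin d)) :
    inner ℝ (qcoef A μ) (feat x) = -qf A (x - μ) / 2 := by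
  rw [qcoef, inner_coef]
  have hsw : ∑ i, ∑ j, μ i * A i j * x j = ∑ i, ∑ j, x i * A i j * μ j := by
    rw [Finset.sum_comm]
    refine Finset.sum_congr rfl (fun i _ => Finset.sum_congr rfl (fun j _ => ?_))
    rw [← hA.apply i j]; ring
  have e : qf A (x - μ) = qf A x - 2 * ∑ i, ∑ j, x i * A i j * μ j + qf A μ := by
    have : qf A (x - μ) = qf A x - ∑ i, ∑ j, x i * A i j * μ j - ∑ i, ∑ j, μ i * A i j * x j
        + qf A μ := by
      simp only [qf, ← Finset.sum_sub_distrib, ← Finset.sum_add_distrib]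
      refine Finset.sum_congr rfl (fun i _ => Finset.sum_congr rfl (fun j _ => ?_))
      simp only [PiLp.sub_apply]; ring
    rw [this, hsw]; ring
  have e1 : ∑ i, ∑ j, -A i j / 2 * (x i * x j) = -qf A x / 2 := by
    rw [qf, ← Finset.sum_neg_distrib, Finset.sum_div]
    refine Finset.sum_congr rfl (fun i _ => ?_)
    rw [← Finset.sum_neg_distrib, Finset.sum_div]
    refine Finset.sum_congr rfl (fun j _ => ?_)
    ring
  have e2 : ∑ i, mv A μ i * x i = ∑ i, ∑ j, x i * A i j * μ j := by
    refine Finset.sum_congr rfl (fun i _ => ?_)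
    rw [mv_apply, Finset.sum_mul]
    refine Finset.sum_congr rfl (fun j _ => ?_)
    ring
  rw [e, e1, e2]; ring

lemma norm_qcoef {d : ℕ} (hd : 1 ≤ d) (S : Matrix (Fin d) (Fin d) ℝ) (ζ ν : ℝ) (hζ : 0 < ζ)
    (hdet : 0 < S.det)
    (hS : ∀ v : EuclideanSpace ℝ (Fin d), v ≠ 0 → ζ * ‖v‖ ^ 2 < qf S v)
    (μ : EuclideanSpace ℝ (Fin d)) (hμ : ‖μ‖ ≤ ν) :
    ‖qcoef S⁻¹ μ‖ ≤ Real.sqrt d * ((1 + ν ^ 2) / ζ) := by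
  have hd1 : (1 : ℝ) ≤ d := by exact_mod_cast hd
  have hν : 0 ≤ ν := (norm_nonneg _).trans hμ
  refine le_of_sq_le_sq ?_ (by positivity)
  rw [qcoef, norm_coef, mul_pow, Real.sq_sqrt (by positivity)]
  have h1 : ∑ i, ∑ j, (-S⁻¹ i j / 2) ^ 2 ≤ d / ζ ^ 2 / 4 := by
    have := frob_inv S ζ hζ hdet hS
    have e : ∑ i, ∑ j, (-S⁻¹ i j / 2) ^ 2 = (∑ i, ∑ j, (S⁻¹ i j) ^ 2) / 4 := by
      rw [Finset.sum_div]
      refine Finset.sum_congr rfl (fun i _ => ?_)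
      rw [Finset.sum_div]
      refine Finset.sum_congr rfl (fun j _ => ?_)
      ring
    rw [e]; linarith
  have h2 : ∑ i, (mv S⁻¹ μ i) ^ 2 ≤ ν ^ 2 / ζ ^ 2 := by
    rw [← EuclideanSpace.real_norm_sq_eq, ← div_pow]
    refine pow_le_pow_left₀ (norm_nonneg _) ?_ 2
    exact (inv_norm S ζ hζ hdet hS μ).trans (by gcongr)
  have h3 : (-qf S⁻¹ μ / 2) ^ 2 ≤ ν ^ 4 / ζ ^ 2 / 4 := by
    have a := qf_inv_nonneg S ζ hζ hdet hS μ
    have b := qf_inv_le S ζ hζ hdet hS μ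
    have c : qf S⁻¹ μ ≤ ν ^ 2 / ζ := b.trans (by gcongr)
    have := pow_le_pow_left₀ a c 2
    have e : (ν ^ 2 / ζ) ^ 2 = ν ^ 4 / ζ ^ 2 := by rw [div_pow]; ring
    rw [e] at this
    linarith
  have h4 : d / ζ ^ 2 / 4 + (ν ^ 2 / ζ ^ 2 + ν ^ 4 / ζ ^ 2 / 4) ≤ d * ((1 + ν ^ 2) / ζ) ^ 2 := by
    have e : d * ((1 + ν ^ 2) / ζ) ^ 2 - (d / ζ ^ 2 / 4 + (ν ^ 2 / ζ ^ 2 + ν ^ 4 / ζ ^ 2 / 4))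
        = ((d - d / 4 : ℝ) + (2 * d - 1) * ν ^ 2 + (d - 1 / 4) * ν ^ 4) / ζ ^ 2 := by
      field_simp; ring
    have : 0 ≤ ((d - d / 4 : ℝ) + (2 * d - 1) * ν ^ 2 + (d - 1 / 4) * ν ^ 4) / ζ ^ 2 := by
      refine div_nonneg ?_ (by positivity)
      have := mul_nonneg (show (0 : ℝ) ≤ 2 * d - 1 by linarith) (show 0 ≤ ν ^ 2 by positivity)
      have := mul_nonneg (show (0 : ℝ) ≤ d - 1 / 4 by linarith) (show 0 ≤ ν ^ 4 by positivity)
      linarith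
    linarith
  linarith

/-- Normalised component weight. -/
noncomputable def wt {d K : ℕ} (π : Fin K → ℝ) (S : Fin K → Matrix (Fin d) (Fin d) ℝ)
    (l : Fin K) : ℝ :=
  π l * (S l).det ^ (-(1 : ℝ) / 2) / ∑ m, π m * (S m).det ^ (-(1 : ℝ) / 2)

lemma resp_eq {d K : ℕ} (π : Fin K → ℝ) (μ : Fin K → EuclideanSpace ℝ (Fin d))
    (S : Fin K → Matrix (Fin d) (Fin d) ℝ) (k : Fin K) (x : EuclideanSpace ℝ (Fin d))
    (hπ : ∀ k, 0 < π k) (hdet : ∀ k, 0 < (S k).det) :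
    resp π μ S k x = wt π S k * Real.exp (-qf (S k)⁻¹ (x - μ k) / 2) /
      ∑ l, wt π S l * Real.exp (-qf (S l)⁻¹ (x - μ l) / 2) := by
  set Z := ∑ m, π m * (S m).det ^ (-(1 : ℝ) / 2) with hZ
  have hW : ∀ m, 0 < π m * (S m).det ^ (-(1 : ℝ) / 2) := fun m =>
    mul_pos (hπ m) (Real.rpow_pos_of_pos (hdet m) _)
  have hZ0 : 0 < Z := Finset.sum_pos (fun m _ => hW m) ⟨k, Finset.mem_univ k⟩
  set c : ℝ := (2 * Real.pi) ^ (-(d : ℝ) / 2) with hc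
  have hc0 : 0 < c := Real.rpow_pos_of_pos (by positivity) _
  have e : ∀ l, π l * gaussDensity x (μ l) (S l) =
      (c * Z) * (wt π S l * Real.exp (-qf (S l)⁻¹ (x - μ l) / 2)) := by
    intro l
    rw [wt, gaussDensity, ← hZ, ← hc, qf]
    field_simp
  rw [resp]
  simp only [e]
  rw [← Finset.mul_sum, mul_div_mul_left _ _ (by positivity)]

lemma wt_sum {d K : ℕ} (k : Fin K) (π : Fin K → ℝ) (S : Fin K → Matrix (Fin d) (Fin d) ℝ)
    (hπ : ∀ k, 0 < π k) (hdet : ∀ k, 0 < (S k).det) :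
    (∀ l, 0 ≤ wt π S l) ∧ ∑ l, wt π S l = 1 := by
  have hW : ∀ m, 0 < π m * (S m).det ^ (-(1 : ℝ) / 2) := fun m =>
    mul_pos (hπ m) (Real.rpow_pos_of_pos (hdet m) _)
  have hZ0 : 0 < ∑ m, π m * (S m).det ^ (-(1 : ℝ) / 2) :=
    Finset.sum_pos (fun m _ => hW m) ⟨k, Finset.mem_univ k⟩
  refine ⟨fun l => div_nonneg (hW l).le hZ0.le, ?_⟩
  simp only [wt]
  rw [← Finset.sum_div, div_self hZ0.ne']

lemma resp_mem {d K : ℕ} (π : Fin K → ℝ) (μ : Fin K → EuclideanSpace ℝ (Fin d))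
    (S : Fin K → Matrix (Fin d) (Fin d) ℝ) (k : Fin K) (x : EuclideanSpace ℝ (Fin d))
    (hπ : ∀ k, 0 < π k) (hdet : ∀ k, 0 < (S k).det) :
    0 ≤ resp π μ S k x ∧ resp π μ S k x ≤ 1 := by
  have h : ∀ l, 0 ≤ π l * gaussDensity x (μ l) (S l) := by
    intro l
    have h1 := Real.rpow_pos_of_pos (hdet l) (-(1 : ℝ) / 2)
    have h2 := hπ l
    rw [gaussDensity]
    positivity
  constructor
  · exact div_nonneg (h k) (Finset.sum_nonneg (fun l _ => h l))
  · exact div_le_one_of_le₀ (Finset.single_le_sum (f := fun l => π l * gaussDensity x (μ l) (S l))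
      (fun l _ => h l) (Finset.mem_univ k)) (Finset.sum_nonneg (fun l _ => h l))

/-- Measure-theoretic transfer from counting. -/
lemma measure_lower {d n : ℕ} (D1 : Finset (EuclideanSpace ℝ (Fin d))) (h1 : D1.Nonempty)
    (G : Set (Fin n → EuclideanSpace ℝ (Fin d))) (Bad : Finset (Fin n → D1)) (δ : ℝ)
    (hG : ∀ ω : Fin n → D1, ω ∉ Bad → (fun i => (ω i : EuclideanSpace ℝ (Fin d))) ∈ G)
    (hBad : (Bad.card : ℝ) ≤ (Fintype.card D1 : ℝ) ^ n * δ) :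
    (Measure.pi fun _ : Fin n => (PMF.uniformOfFinset D1 h1).toMeasure) G
      ≥ ENNReal.ofReal (1 - δ) := by
  classical
  set P := (Measure.pi fun _ : Fin n => (PMF.uniformOfFinset D1 h1).toMeasure) with hP
  let emb : (Fin n → D1) ↪ (Fin n → EuclideanSpace ℝ (Fin d)) :=
    ⟨fun ω i => ω i, fun a b hab => by
      funext i; exact Subtype.ext (congrFun hab i)⟩
  have hsub : ((Badᶜ.map emb : Finset _) : Set (Fin n → EuclideanSpace ℝ (Fin d))) ⊆ G := by
    intro ω hω
    simp only [Finset.coe_map, Set.mem_image, Finset.mem_coe, Finset.mem_compl] at hω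
    obtain ⟨ω', h, rfl⟩ := hω
    exact hG ω' h
  refine ge_iff_le.mpr (le_trans ?_ (measure_mono hsub))
  rw [← sum_measure_singleton, Finset.sum_map]
  have hN : 0 < D1.card := h1.card_pos
  have hpt : ∀ ω : Fin n → D1, P {emb ω} = ((D1.card : ENNReal)⁻¹) ^ n := by
    intro ω
    rw [hP, Measure.pi_singleton]
    have : ∀ i, (PMF.uniformOfFinset D1 h1).toMeasure {emb ω i} = (D1.card : ENNReal)⁻¹ := by
      intro i
      rw [PMF.toMeasure_apply_singleton _ _ (measurableSet_singleton _)]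
      exact PMF.uniformOfFinset_apply_of_mem h1 (ω i).2
    simp only [this, Finset.prod_const, Finset.card_univ, Fintype.card_fin]
  simp only [hpt, Finset.sum_const, nsmul_eq_mul]
  have hNr : (0 : ℝ) < D1.card := by exact_mod_cast hN
  have e : ((Badᶜ.card : ℕ) : ENNReal) * ((D1.card : ENNReal)⁻¹) ^ n =
      ENNReal.ofReal ((Badᶜ.card : ℝ) * ((D1.card : ℝ)⁻¹) ^ n) := by
    rw [ENNReal.ofReal_mul (by positivity), ENNReal.ofReal_natCast,
      ENNReal.ofReal_pow (by positivity), ENNReal.ofReal_inv_of_pos hNr, ENNReal.ofReal_natCast]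
  rw [e]
  apply ENNReal.ofReal_le_ofReal
  have hc : (Badᶜ.card : ℝ) = (D1.card : ℝ) ^ n - Bad.card := by
    rw [Finset.card_compl, Nat.cast_sub (Finset.card_le_univ _)]
    simp
  simp only [Fintype.card_coe] at hBad
  rw [hc, inv_pow, ← div_eq_mul_inv, le_div_iff₀ (by positivity)]
  linarith

end RUD

namespace RUD

open Finset
open scoped BigOperators Matrix

/-- The Lipschitz/feature data of the responsibilities at a parameter. -/
lemma main_count {d K : ℕ} (hd : 1 ≤ d) (ξ ζ ν xmax : ℝ) (hζ : 0 < ζ) (hν : 0 < ν)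
    (k : Fin K) (D1 : Finset (EuclideanSpace ℝ (Fin d))) (h1 : D1.Nonempty)
    (hx : ∀ x ∈ D1, ‖x‖ ≤ xmax) (n : ℕ) (hn : 1 ≤ n) (s : ℝ) (hs : 0 ≤ s)
    (sign : ℝ) (hsign : |sign| = 1) (B : Finset (Fin n → D1))
    (hB : ∀ ω ∈ B, ∃ (π : Fin K → ℝ) (μ : Fin K → EuclideanSpace ℝ (Fin d))
      (S : Fin K → Matrix (Fin d) (Fin d) ℝ), inPhi ξ ζ ν π μ S ∧
        2 * (2 * K) ^ 2 * (2 * Real.exp ((xmax + ν) ^ 2 / ζ / 2) *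
          (Real.sqrt d * (1 + (1 + ν ^ 2) / ζ))) * (xmax ^ 2 + 1) * Real.sqrt n + s <
        sign * (∑ i, resp π μ S k (ω i) - n * ((∑ x ∈ D1, resp π μ S k x) / (D1.card : ℝ)))) :
    (B.card : ℝ) ≤ (Fintype.card D1 : ℝ) ^ n * Real.exp (-(s ^ 2 / (2 * n))) := by
  classical
  have hne : Nonempty D1 := h1.to_subtype
  let T := {θ : (Fin K → ℝ) × (Fin K → EuclideanSpace ℝ (Fin d)) ×
    (Fin K → Matrix (Fin d) (Fin d) ℝ) // inPhi ξ ζ ν θ.1 θ.2.1 θ.2.2}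
  set L : ℝ := 2 * Real.exp ((xmax + ν) ^ 2 / ζ / 2) with hL
  have hL0 : 0 < L := by positivity
  have hd1 : (1 : ℝ) ≤ d := by exact_mod_cast hd
  have hsd : 1 ≤ Real.sqrt d := by rw [Real.one_le_sqrt]; exact hd1
  have hxm : 0 ≤ xmax := by
    obtain ⟨x, hx'⟩ := h1
    exact (norm_nonneg x).trans (hx x hx')
  have hS : ∀ (t : T) l, ∀ v : EuclideanSpace ℝ (Fin d), v ≠ 0 →
      ζ * ‖v‖ ^ 2 < qf (t.1.2.2 l) v := fun t l v hv => ((t.2.2.2.2.2 l).2 v hv).1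
  have hsym : ∀ (t : T) l, (t.1.2.2 l).IsSymm := fun t l => (t.2.2.2.2.2 l).1
  have hdet : ∀ (t : T) l, 0 < (t.1.2.2 l).det := fun t l =>
    cov_det _ ζ hζ (hsym t l) (hS t l)
  have hπ : ∀ (t : T) l, 0 < t.1.1 l := fun t => t.2.1
  have hμ : ∀ (t : T) l, ‖t.1.2.1 l‖ ≤ ν := fun t l => t.2.2.2.2.1 l
  have hisym : ∀ (t : T) l, (t.1.2.2 l)⁻¹.IsSymm := by
    intro t l
    rw [Matrix.IsSymm, Matrix.transpose_nonsing_inv, (hsym t l)]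
  let a : Fin K ⊕ Fin K → T → FS d := fun j t =>
    L • Sum.elim (fun l => coef (fun _ _ => 0) (fun _ => 0) (wt t.1.1 t.1.2.2 l))
      (fun l => qcoef (t.1.2.2 l)⁻¹ (t.1.2.1 l)) j
  have hcardJ : (Fintype.card (Fin K ⊕ Fin K) : ℝ) = 2 * K := by
    simp; ring
  have hra : ∀ (t : T) x, 0 ≤ resp t.1.1 t.1.2.1 t.1.2.2 k x ∧
      resp t.1.1 t.1.2.1 t.1.2.2 k x ≤ 1 := fun t x => resp_mem _ _ _ k x (hπ t) (hdet t)
  refine one_sided (J := Fin K ⊕ Fin K) (T := T) (H := FS d)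
    (fun t (x : D1) => sign * resp t.1.1 t.1.2.1 t.1.2.2 k x) ?_ a (fun x => feat x)
    (L * (Real.sqrt d * (1 + (1 + ν ^ 2) / ζ))) (xmax ^ 2 + 1) (by positivity) (by positivity)
    ?_ ?_ ?_ n hn s hs B ?_
  · intro t x y
    rw [← mul_sub, abs_mul, hsign, one_mul, abs_le]
    have h1 := hra t x
    have h2 := hra t y
    constructor <;> linarith [h1.1, h1.2, h2.1, h2.2]
  · intro j t
    simp only [a, norm_smul, Real.norm_eq_abs, abs_of_pos hL0]
    refine mul_le_mul_of_nonneg_left ?_ hL0.le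
    have hq : 0 ≤ (1 + ν ^ 2) / ζ := by positivity
    rcases j with l | l
    · obtain ⟨w0, w1⟩ := wt_sum k t.1.1 t.1.2.2 (hπ t) (hdet t)
      have hle : wt t.1.1 t.1.2.2 l ≤ 1 := by
        rw [← w1]; exact Finset.single_le_sum (fun i _ => w0 i) (Finset.mem_univ l)
      simp only [Sum.elim_inl]
      have h2 : ‖coef (d := d) (fun _ _ => 0) (fun _ => 0) (wt t.1.1 t.1.2.2 l)‖ ≤ 1 := by
        refine le_of_sq_le_sq ?_ (by positivity)
        rw [norm_coef]
        simp only [ne_eq, OfNat.ofNat_ne_zero, not_false_eq_true, zero_pow, Finset.sum_const_zero,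
          zero_add, one_pow]
        exact pow_le_one₀ (w0 l) hle
      nlinarith
    · simp only [Sum.elim_inr]
      have := norm_qcoef hd (t.1.2.2 l) ζ ν hζ (hdet t l) (hS t l) (t.1.2.1 l) (hμ t l)
      nlinarith
  · intro x
    refine (norm_feat _).trans ?_
    have := hx x x.2
    gcongr
  · intro t t' x
    rw [← mul_sub, abs_mul, hsign, one_mul]
    have hb : ∀ (t : T) l, -((xmax + ν) ^ 2 / ζ / 2) ≤
        -qf (t.1.2.2 l)⁻¹ ((x : EuclideanSpace ℝ (Fin d)) - t.1.2.1 l) / 2 ∧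
        -qf (t.1.2.2 l)⁻¹ ((x : EuclideanSpace ℝ (Fin d)) - t.1.2.1 l) / 2 ≤ 0 := by
      intro t l
      have e1 := qf_inv_nonneg _ ζ hζ (hdet t l) (hS t l)
        ((x : EuclideanSpace ℝ (Fin d)) - t.1.2.1 l)
      have e2 := qf_inv_le _ ζ hζ (hdet t l) (hS t l)
        ((x : EuclideanSpace ℝ (Fin d)) - t.1.2.1 l)
      have e3 : ‖(x : EuclideanSpace ℝ (Fin d)) - t.1.2.1 l‖ ≤ xmax + ν :=
        (norm_sub_le _ _).trans (add_le_add (hx x x.2) (hμ t l))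
      have e4 : ‖(x : EuclideanSpace ℝ (Fin d)) - t.1.2.1 l‖ ^ 2 / ζ ≤ (xmax + ν) ^ 2 / ζ := by
        gcongr
      constructor <;> linarith
    obtain ⟨w0, w1⟩ := wt_sum k t.1.1 t.1.2.2 (hπ t) (hdet t)
    obtain ⟨w0', w1'⟩ := wt_sum k t'.1.1 t'.1.2.2 (hπ t') (hdet t')
    rw [resp_eq _ _ _ k _ (hπ t) (hdet t), resp_eq _ _ _ k _ (hπ t') (hdet t')]
    refine (softmax_lip k (wt t.1.1 t.1.2.2) (wt t'.1.1 t'.1.2.2)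
      (fun l => -qf (t.1.2.2 l)⁻¹ ((x : EuclideanSpace ℝ (Fin d)) - t.1.2.1 l) / 2)
      (fun l => -qf (t'.1.2.2 l)⁻¹ ((x : EuclideanSpace ℝ (Fin d)) - t'.1.2.1 l) / 2)
      ((xmax + ν) ^ 2 / ζ / 2) w0 w1 (fun l => (hb t l).1) (fun l => (hb t l).2)
      w0' w1' (fun l => (hb t' l).1) (fun l => (hb t' l).2)).trans (le_of_eq ?_)
    rw [Fintype.sum_sum_type, Finset.sum_add_distrib, mul_add, Finset.mul_sum, Finset.mul_sum]
    congr 1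
    · refine Finset.sum_congr rfl (fun l _ => ?_)
      simp only [a, Sum.elim_inl, inner_smul_left, inner_coef]
      rw [← mul_sub, abs_mul]
      simp [abs_of_pos hL0, hL]
    · refine Finset.sum_congr rfl (fun l _ => ?_)
      simp only [a, Sum.elim_inr, inner_smul_left]
      rw [inner_qcoef _ (hisym t l), inner_qcoef _ (hisym t' l), ← mul_sub, abs_mul]
      simp [abs_of_pos hL0, hL]
  · intro ω hω
    obtain ⟨π, μ, S, hphi, hlt⟩ := hB ω hω
    refine ⟨⟨(π, μ, S), hphi⟩, ?_⟩
    rw [hcardJ]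
    refine hlt.trans_le (le_of_eq ?_)
    simp only
    rw [Finset.sum_sub_distrib, Finset.sum_const, nsmul_eq_mul, ← Finset.mul_expect,
      Fintype.expect_eq_sum_div_card, ← Finset.mul_sum]
    rw [Finset.sum_coe_sort D1 (fun x => resp π μ S k x)]
    simp only [Finset.card_univ, Fintype.card_fin, Fintype.card_coe]
    ring

end RUD

/-- **Uniform deviation of empirical responsibilities.**  For i.i.d. uniform draws
`X₁,…,X_{n₁}` (with replacement) from a finite set `D¹` of norm-bounded points and a fixed
component `k`, there is a constant `C = C(ξ,ζ,ν,x_max) > 0` such that with probability at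
least `1 - δ`,
`sup_{Θ∈Φ} |(1/n₁)Σᵢ ψ_k(Xᵢ;Θ) - (1/|D¹|)Σ_{x∈D¹} ψ_k(x;Θ)| ≤ 2C√(d/n₁) + 4√(2 log(4/δ)/n₁)`. -/
theorem responsibility_uniform_deviation
    (ξ ζ ν xmax : ℝ) (hξ : 0 < ξ) (hζ : 0 < ζ) (hν : 0 < ν) (hxmax : 0 < xmax) :
    ∃ C : ℝ, 0 < C ∧
      ∀ (d K : ℕ), 0 < K → ∀ k : Fin K,
      ∀ (D1 : Finset (EuclideanSpace ℝ (Fin d))) (h1 : D1.Nonempty),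
        (∀ x ∈ D1, ‖x‖ ≤ xmax) →
      ∀ n1 : ℕ, 1 ≤ n1 →
      ∀ δ : ℝ, 0 < δ → δ < 1 →
        (Measure.pi fun _ : Fin n1 => (PMF.uniformOfFinset D1 h1).toMeasure)
          {ω : Fin n1 → EuclideanSpace ℝ (Fin d) |
            ∀ (π : Fin K → ℝ) (μ : Fin K → EuclideanSpace ℝ (Fin d))
              (S : Fin K → Matrix (Fin d) (Fin d) ℝ), inPhi ξ ζ ν π μ S →
              |(∑ i, resp π μ S k (ω i)) / (n1 : ℝ) -
                  (∑ x ∈ D1, resp π μ S k x) / (D1.card : ℝ)| ≤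
                2 * C * Real.sqrt ((d : ℝ) / n1) +
                  4 * Real.sqrt (2 * Real.log (4 / δ) / n1)} ≥
          ENNReal.ofReal (1 - δ) := by
  refine ⟨(2 / ξ) ^ 2 * (2 * Real.exp ((xmax + ν) ^ 2 / ζ / 2) * (1 + (1 + ν ^ 2) / ζ)) *
    (xmax ^ 2 + 1), by positivity, ?_⟩
  intro d K hK k D1 h1 hx n hn δ hδ0 hδ1
  set C := (2 / ξ) ^ 2 * (2 * Real.exp ((xmax + ν) ^ 2 / ζ / 2) * (1 + (1 + ν ^ 2) / ζ)) *
    (xmax ^ 2 + 1) with hC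
  have hn0 : (0 : ℝ) < n := by exact_mod_cast hn
  have hN0 : (0 : ℝ) < D1.card := by exact_mod_cast h1.card_pos
  have hlog : 0 < Real.log (4 / δ) := Real.log_pos (by rw [lt_div_iff₀ hδ0]; linarith)
  rcases Nat.eq_zero_or_pos d with hd | hd
  · subst hd
    have huniv : ∀ G : Set (Fin n → EuclideanSpace ℝ (Fin 0)), (∀ ω, ω ∈ G) →
        (Measure.pi fun _ : Fin n => (PMF.uniformOfFinset D1 h1).toMeasure) G ≥
          ENNReal.ofReal (1 - δ) := by
      intro G hG
      rw [Set.eq_univ_of_forall hG, measure_univ]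
      refine ENNReal.ofReal_le_one.mpr (by linarith)
    apply huniv
    intro ω π μ S _
    have e : ∀ x, resp π μ S k x = resp π μ S k 0 := fun x => by
      rw [Subsingleton.elim x 0]
    simp only [e, Finset.sum_const, nsmul_eq_mul, Finset.card_univ, Fintype.card_fin]
    rw [mul_div_cancel_left₀ _ hn0.ne', mul_div_cancel_left₀ _ hN0.ne', sub_self, abs_zero]
    positivity
  · classical
    set s : ℝ := Real.sqrt (2 * n * Real.log (4 / δ)) with hs
    have hs0 : 0 ≤ s := Real.sqrt_nonneg _
    have hs2 : s ^ 2 / (2 * n) = Real.log (4 / δ) := by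
      rw [hs, Real.sq_sqrt (by positivity)]; field_simp
    have hexp : Real.exp (-(s ^ 2 / (2 * n))) = δ / 4 := by
      rw [hs2, Real.exp_neg, Real.exp_log (by positivity), inv_div]
    let R : ℝ := 2 * (2 * K) ^ 2 * (2 * Real.exp ((xmax + ν) ^ 2 / ζ / 2) *
          (Real.sqrt d * (1 + (1 + ν ^ 2) / ζ))) * (xmax ^ 2 + 1) * Real.sqrt n + s
    let Bd : ℝ → Finset (Fin n → D1) := fun sign => Finset.univ.filter (fun ω =>
      ∃ (π : Fin K → ℝ) (μ : Fin K → EuclideanSpace ℝ (Fin d))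
      (S : Fin K → Matrix (Fin d) (Fin d) ℝ), inPhi ξ ζ ν π μ S ∧
        R < sign * (∑ i, resp π μ S k (ω i) -
          n * ((∑ x ∈ D1, resp π μ S k x) / (D1.card : ℝ))))
    have hBd : ∀ sign : ℝ, |sign| = 1 →
        ((Bd sign).card : ℝ) ≤ (Fintype.card D1 : ℝ) ^ n * (δ / 4) := by
      intro sign hsign
      rw [← hexp]
      refine RUD.main_count hd ξ ζ ν xmax hζ hν k D1 h1 hx n hn s hs0 sign hsign (Bd sign) ?_
      intro ω hω
      exact (Finset.mem_filter.mp hω).2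
    refine RUD.measure_lower D1 h1 _ (Bd 1 ∪ Bd (-1)) δ ?_ ?_
    · intro ω hω π μ S hphi
      rw [Finset.mem_union, not_or] at hω
      obtain ⟨hp, hm⟩ := hω
      simp only [Bd, Finset.mem_filter, Finset.mem_univ, true_and, not_exists, not_and,
        not_lt] at hp hm
      have hp' := hp π μ S hphi
      have hm' := hm π μ S hphi
      have hKξ : (K : ℝ) ≤ 1 / ξ := by
        rw [le_div_iff₀ hξ, ← hphi.2.1]
        calc (K : ℝ) * ξ = ∑ _l : Fin K, ξ := by simp
          _ ≤ _ := Finset.sum_le_sum (fun l _ => (hphi.2.2.1 l).1.le)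
      have hR : R ≤ n * (2 * C * Real.sqrt ((d : ℝ) / n) +
          4 * Real.sqrt (2 * Real.log (4 / δ) / n)) := by
        have hsn : Real.sqrt n * Real.sqrt n = n := Real.mul_self_sqrt hn0.le
        have hsn0 : 0 < Real.sqrt n := Real.sqrt_pos.mpr hn0
        have r1 : n * Real.sqrt ((d : ℝ) / n) = Real.sqrt d * Real.sqrt n := by
          rw [Real.sqrt_div (Nat.cast_nonneg d)]
          nth_rewrite 1 [← hsn]
          field_simp
        have r2 : n * Real.sqrt (2 * Real.log (4 / δ) / n) = s := by
          rw [hs, show 2 * (n : ℝ) * Real.log (4 / δ) = n ^ 2 * (2 * Real.log (4 / δ) / n) by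
            field_simp, Real.sqrt_mul (by positivity), Real.sqrt_sq hn0.le]
        have r3 : (2 * (K : ℝ)) ^ 2 ≤ (2 / ξ) ^ 2 := by
          refine pow_le_pow_left₀ (by positivity) ?_ 2
          have : 2 / ξ = 2 * (1 / ξ) := by ring
          rw [this]; linarith
        have r4 : n * (2 * C * Real.sqrt ((d : ℝ) / n) +
            4 * Real.sqrt (2 * Real.log (4 / δ) / n)) =
            2 * C * (Real.sqrt d * Real.sqrt n) + 4 * s := by
          rw [← r1, ← r2]; ring
        rw [r4]
        have r5 : 2 * (2 * (K : ℝ)) ^ 2 * (2 * Real.exp ((xmax + ν) ^ 2 / ζ / 2) *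
          (Real.sqrt d * (1 + (1 + ν ^ 2) / ζ))) * (xmax ^ 2 + 1) * Real.sqrt n ≤
            2 * (2 / ξ) ^ 2 * (2 * Real.exp ((xmax + ν) ^ 2 / ζ / 2) *
          (Real.sqrt d * (1 + (1 + ν ^ 2) / ζ))) * (xmax ^ 2 + 1) * Real.sqrt n := by
          gcongr
        have r6 : 2 * (2 / ξ) ^ 2 * (2 * Real.exp ((xmax + ν) ^ 2 / ζ / 2) *
          (Real.sqrt d * (1 + (1 + ν ^ 2) / ζ))) * (xmax ^ 2 + 1) * Real.sqrt n =
            2 * C * (Real.sqrt d * Real.sqrt n) := by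
          rw [hC]; ring
        simp only [R]
        linarith
      have hfin : |∑ i, resp π μ S k (ω i) -
          n * ((∑ x ∈ D1, resp π μ S k x) / (D1.card : ℝ))| ≤
          n * (2 * C * Real.sqrt ((d : ℝ) / n) + 4 * Real.sqrt (2 * Real.log (4 / δ) / n)) := by
        rw [abs_le]; constructor <;> linarith
      have e : (∑ i, resp π μ S k (ω i)) / (n : ℝ) -
          (∑ x ∈ D1, resp π μ S k x) / (D1.card : ℝ) =
          (∑ i, resp π μ S k (ω i) -
            n * ((∑ x ∈ D1, resp π μ S k x) / (D1.card : ℝ))) / n := by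
        field_simp
      rw [e, abs_div, abs_of_pos hn0, div_le_iff₀ hn0, mul_comm _ (n : ℝ)]
      exact hfin
    · have hu : ((Bd 1 ∪ Bd (-1)).card : ℝ) ≤ (Bd 1).card + (Bd (-1)).card := by
        exact_mod_cast Finset.card_union_le _ _
      have b1 := hBd 1 (by simp)
      have b2 := hBd (-1) (by simp)
      have : (0 : ℝ) ≤ (Fintype.card D1 : ℝ) ^ n * δ := by positivity
      linarith
end

section
/- Let f : ℝ^p → ℝ be differentiable with L-Lipschitz gradient (L > 0), let Φ ⊆ ℝ^p be a nonempty closed convex set, let x ∈ Φ, let 0 < γ < 2/L, and let y = Π_Φ(x − γ∇f(x)). Define the gradient mapping G_γ(x) = (x − y)/γ and ν = γ − (L/2)γ², so that ν > 0. Then f(y) ≤ f(x) − ν‖G_γ(x)‖². -/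
theorem descent_aux {p : ℕ}
    (f : EuclideanSpace ℝ (Fin p) → ℝ)
    (gradf : EuclideanSpace ℝ (Fin p) → EuclideanSpace ℝ (Fin p))
    (hgrad : ∀ u, HasGradientAt f (gradf u) u)
    (L : ℝ)
    (hLip : ∀ u v, ‖gradf u - gradf v‖ ≤ L * ‖u - v‖)
    (x v : EuclideanSpace ℝ (Fin p)) :
    f (x + v) ≤ f x + inner ℝ (gradf x) v + L / 2 * ‖v‖ ^ 2 := by
  have hd : ∀ t : ℝ, HasDerivAt
      (fun t : ℝ => f (x + t • v) - t * inner ℝ (gradf x) v - L / 2 * ‖v‖ ^ 2 * t ^ 2)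
      (inner ℝ (gradf (x + t • v)) v - inner ℝ (gradf x) v - L * ‖v‖ ^ 2 * t) t := by
    intro t
    have h1 : HasDerivAt (fun t : ℝ => x + t • v) v t := by
      simpa using ((hasDerivAt_id t).smul_const v).const_add x
    have h2 := (hgrad (x + t • v)).hasFDerivAt.comp_hasDerivAt t h1
    have h3 : HasDerivAt (fun t : ℝ => f (x + t • v)) (inner ℝ (gradf (x + t • v)) v) t := by
      simpa [Function.comp_def] using h2
    have h4 := (hasDerivAt_id t).mul_const (inner ℝ (gradf x) v)
    have h5 := ((hasDerivAt_id t).pow 2).const_mul (L / 2 * ‖v‖ ^ 2)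
    refine ((h3.sub h4).sub h5).congr_deriv ?_
    simp
    ring
  have hanti := antitoneOn_of_deriv_nonpos (convex_Icc (0 : ℝ) 1)
    (fun t _ => (hd t).continuousAt.continuousWithinAt)
    (fun t _ => (hd t).differentiableAt.differentiableWithinAt) (by
      intro t ht
      rw [interior_Icc] at ht
      rw [(hd t).deriv, ← inner_sub_left]
      have h1 := real_inner_le_norm (gradf (x + t • v) - gradf x) v
      have h2 := hLip (x + t • v) x
      rw [add_sub_cancel_left, norm_smul, Real.norm_of_nonneg ht.1.le] at h2
      nlinarith [mul_le_mul_of_nonneg_right h2 (norm_nonneg v)])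
  have := hanti (by simp) (by simp) (zero_le_one (α := ℝ))
  simp at this
  linarith


/-- **Sufficient decrease for the projected gradient step.**  Let `f : ℝ^p → ℝ` be
differentiable with `L`-Lipschitz gradient, `Φ` a nonempty closed convex set, `x ∈ Φ`,
`0 < γ < 2/L`, and `y = Π_Φ(x - γ∇f(x))` the metric projection.  With the gradient
mapping `G_γ(x) = (x - y)/γ` and `ν = γ - (L/2)γ² > 0`, we have
`f(y) ≤ f(x) - ν ‖G_γ(x)‖²`. -/
theorem projected_gradient_descent_decrease {p : ℕ}
    (f : EuclideanSpace ℝ (Fin p) → ℝ)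
    (gradf : EuclideanSpace ℝ (Fin p) → EuclideanSpace ℝ (Fin p))
    (hgrad : ∀ u, HasGradientAt f (gradf u) u)
    (L : ℝ) (hL : 0 < L)
    (hLip : ∀ u v, ‖gradf u - gradf v‖ ≤ L * ‖u - v‖)
    (Φ : Set (EuclideanSpace ℝ (Fin p))) (hne : Φ.Nonempty) (hclosed : IsClosed Φ)
    (hconv : Convex ℝ Φ)
    (x : EuclideanSpace ℝ (Fin p)) (hx : x ∈ Φ)
    (γ : ℝ) (hγ0 : 0 < γ) (hγ2 : γ < 2 / L)
    (y : EuclideanSpace ℝ (Fin p)) (hy : y ∈ Φ)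
    (hproj : ∀ w ∈ Φ, ‖x - γ • gradf x - y‖ ≤ ‖x - γ • gradf x - w‖) :
    f y ≤ f x - (γ - (L / 2) * γ ^ 2) * ‖γ⁻¹ • (x - y)‖ ^ 2 := by
  have hvar : inner ℝ (x - γ • gradf x - y) (x - y) ≤ (0 : ℝ) := by
    refine (norm_eq_iInf_iff_real_inner_le_zero hconv hy).1 ?_ x hx
    haveI : Nonempty Φ := ⟨⟨y, hy⟩⟩
    refine le_antisymm (le_ciInf fun w => hproj w w.2) ?_
    exact ciInf_le (f := fun w : Φ => ‖x - γ • gradf x - w‖)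
      ⟨0, by rintro _ ⟨w, rfl⟩; exact norm_nonneg _⟩ ⟨y, hy⟩
  have hdesc := descent_aux f gradf hgrad L hLip x (y - x)
  rw [add_sub_cancel, ← neg_sub x y, inner_neg_right, norm_neg] at hdesc
  rw [sub_right_comm, inner_sub_left, real_inner_self_eq_norm_sq, inner_smul_left] at hvar
  simp only [conj_trivial] at hvar
  have h1 : γ⁻¹ * ‖x - y‖ ^ 2 ≤ inner ℝ (gradf x) (x - y) := by
    rw [inv_mul_le_iff₀ hγ0]
    linarith
  have h2 : (γ - (L / 2) * γ ^ 2) * ‖γ⁻¹ • (x - y)‖ ^ 2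
      = γ⁻¹ * ‖x - y‖ ^ 2 - L / 2 * ‖x - y‖ ^ 2 := by
    rw [norm_smul, Real.norm_of_nonneg (inv_nonneg.2 hγ0.le)]
    field_simp
  rw [h2]
  linarith
end
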